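/- arXiv:2209.04523 — 7 statements merged into one kernel-verified Lean document; each statement's English description precedes it below -/
import Mathlib

section
/- Tilting lemma for Onsager–Machlup ratios: Let B be a Banach space, μ₀ a Borel probability measure on B, and Φ : B → ℝ a continuous function with 0 < ∫_B e^{−Φ} dμ₀ < ∞. Define the Borel probability measure μ by μ(A) = (∫_B e^{−Φ} dμ₀)^{−1} ∫_A e^{−Φ} dμ₀. Let z₁, z₂ ∈ B be such that μ₀(B_ε(z₂)) > 0 for all sufficiently small ε > 0 and the limit L := lim_{ε→0⁺} μ₀(B_ε(z₁))/μ₀(B_ε(z₂)) exists in [0, ∞). Then lim_{ε→0⁺} μ(B_ε(z₁))/μ(B_ε(z₂)) = exp(Φ(z₂) − Φ(z₁)) · L. -/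
open MeasureTheory Filter Metric Set Topology

/-!
A measure with density `w` with respect to `μ₀` assigns to sets shrinking to a point `z` a mass
asymptotically equivalent to `w z` times their `μ₀`-mass, if `w` is continuous at `z` and
`w z ≠ 0`. For the tilted measure the normalizing constants cancel in the ratio of two balls, which
leaves the factor `exp (-Φ z₁) / exp (-Φ z₂)`. Stating this with asymptotic equivalence rather than
averages allows the balls around `z₁` to be null.
-/

open scoped Asymptotics

section SmallSets

variable {X ι : Type*} [TopologicalSpace X] [MeasurableSpace X] [OpensMeasurableSpace X]
  {μ : Measure X} [IsLocallyFiniteMeasure μ] {a : X} {l : Filter ι} {s : ι → Set X}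

theorem isEquivalent_setIntegral_of_tendsto_smallSets {E : Type*} [NormedAddCommGroup E]
    [NormedSpace ℝ E] [CompleteSpace E] {f : X → E} (hf : ContinuousAt f a) (hfa : f a ≠ 0)
    (hfm : StronglyMeasurableAtFilter f (𝓝 a) μ) (hs : Tendsto s l (𝓝 a).smallSets) :
    (fun i => ∫ x in s i, f x ∂μ) ~[l] fun i => μ.real (s i) • f a := by
  have hbound : (fun i => μ.real (s i)) =O[l] fun i => μ.real (s i) • f a :=
    .of_bound ‖f a‖⁻¹ <| .of_forall fun i => by
      rw [norm_smul, mul_comm ‖μ.real (s i)‖, inv_mul_cancel_left₀ (norm_ne_zero_iff.2 hfa)]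
  exact (hf.integral_sub_linear_isLittleO_ae hfm hs).trans_isBigO hbound

theorem isEquivalent_real_tilted_of_tendsto_smallSets [NeZero μ] {f : X → ℝ}
    (hf : ContinuousAt f a) (hint : Integrable (fun x => Real.exp (f x)) μ)
    (hs : Tendsto s l (𝓝 a).smallSets) (hsm : ∀ᶠ i in l, MeasurableSet (s i)) :
    (fun i => (μ.tilted f).real (s i)) ~[l]
      fun i => μ.real (s i) * (Real.exp (f a) / ∫ x, Real.exp (f x) ∂μ) := by
  have hZ : 0 < ∫ x, Real.exp (f x) ∂μ := integral_exp_pos hint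
  have hdensity := isEquivalent_setIntegral_of_tendsto_smallSets (hf.rexp.div_const _)
    (div_pos (Real.exp_pos _) hZ).ne'
    (hint.div_const _).aestronglyMeasurable.stronglyMeasurableAtFilter hs
  refine hdensity.congr_left (hsm.mono fun i hi => ?_)
  have hnonneg : 0 ≤ ∫ x in s i, Real.exp (f x) / ∫ y, Real.exp (f y) ∂μ ∂μ :=
    integral_nonneg fun x => by positivity
  simp only [measureReal_def, tilted_apply_eq_ofReal_integral' f hi,
    ENNReal.toReal_ofReal hnonneg]

end SmallSets

theorem tendsto_ball_smallSets_nhds {X : Type*} [PseudoMetricSpace X] (a : X) :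
    Tendsto (ball a) (𝓝[>] (0 : ℝ)) (𝓝 a).smallSets := by
  refine nhds_basis_ball.smallSets.tendsto_right_iff.2 fun r hr => ?_
  filter_upwards [Ioo_mem_nhdsGT hr] with ε hε using ball_subset_ball hε.2.le

theorem onsager_machlup_tilting_general {X : Type*} [PseudoMetricSpace X] [MeasurableSpace X]
    [OpensMeasurableSpace X] {μ : Measure X} [IsLocallyFiniteMeasure μ] {Φ : X → ℝ} {z₁ z₂ : X}
    (hΦ₁ : ContinuousAt Φ z₁) (hΦ₂ : ContinuousAt Φ z₂)
    (hint : Integrable (fun x => Real.exp (-Φ x)) μ)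
    (hball : ∀ᶠ ε in 𝓝[>] (0 : ℝ), 0 < μ (ball z₂ ε)) {L : ℝ}
    (hlim : Tendsto (fun ε => μ.real (ball z₁ ε) / μ.real (ball z₂ ε)) (𝓝[>] 0) (𝓝 L)) :
    Tendsto (fun ε => (μ.tilted fun x => -Φ x).real (ball z₁ ε) /
        (μ.tilted fun x => -Φ x).real (ball z₂ ε))
      (𝓝[>] 0) (𝓝 (Real.exp (Φ z₂ - Φ z₁) * L)) := by
  obtain ⟨ε, hε⟩ := hball.exists
  have : NeZero μ := ⟨fun h => hε.ne' (by simp [h])⟩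
  have hZ : 0 < ∫ x, Real.exp (-Φ x) ∂μ := integral_exp_pos hint
  have hmass {z : X} (hΦ : ContinuousAt Φ z) :
      (fun ε => (μ.tilted fun x => -Φ x).real (ball z ε)) ~[𝓝[>] 0]
        fun ε => μ.real (ball z ε) * (Real.exp (-Φ z) / ∫ x, Real.exp (-Φ x) ∂μ) :=
    isEquivalent_real_tilted_of_tendsto_smallSets hΦ.neg hint (tendsto_ball_smallSets_nhds z)
      (.of_forall fun _ => measurableSet_ball)
  refine ((hmass hΦ₁).div (hmass hΦ₂)).symm.tendsto_nhds ?_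
  refine (hlim.const_mul (Real.exp (Φ z₂ - Φ z₁))).congr fun ε => ?_
  have hexp : Real.exp (Φ z₂ - Φ z₁) = Real.exp (-Φ z₁) / Real.exp (-Φ z₂) := by
    rw [← Real.exp_sub, neg_sub_neg]
  rw [hexp, Pi.div_apply, mul_div_mul_comm, div_div_div_cancel_right₀ hZ.ne', mul_comm]

/-- **Tilting lemma for Onsager–Machlup ratios.**
If `μ` is obtained from the Borel probability measure `μ₀` on a Banach space `B` by tilting
with the density `e^{-Φ}` (normalized), `Φ` continuous, then the small-ball ratio limits of
`μ` are those of `μ₀` multiplied by `exp (Φ z₂ - Φ z₁)`. -/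
theorem onsager_machlup_tilting
    {B : Type*} [NormedAddCommGroup B] [NormedSpace ℝ B] [CompleteSpace B]
    [MeasurableSpace B] [BorelSpace B]
    (μ₀ μ : Measure B) [IsProbabilityMeasure μ₀] [IsProbabilityMeasure μ]
    (Φ : B → ℝ) (hΦ : Continuous Φ)
    (hInt : Integrable (fun x => Real.exp (-Φ x)) μ₀)
    (hpos : 0 < ∫ x, Real.exp (-Φ x) ∂μ₀)
    (hμ : ∀ A : Set B, MeasurableSet A →
      μ A = ENNReal.ofReal ((∫ x in A, Real.exp (-Φ x) ∂μ₀) / ∫ x, Real.exp (-Φ x) ∂μ₀))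
    (z₁ z₂ : B)
    (hball : ∀ᶠ ε in 𝓝[>] (0 : ℝ), 0 < μ₀ (ball z₂ ε))
    (L : ℝ) (hL : 0 ≤ L)
    (hlim : Tendsto (fun ε : ℝ => (μ₀ (ball z₁ ε)).toReal / (μ₀ (ball z₂ ε)).toReal)
      (𝓝[>] (0 : ℝ)) (𝓝 L)) :
    Tendsto (fun ε : ℝ => (μ (ball z₁ ε)).toReal / (μ (ball z₂ ε)).toReal)
      (𝓝[>] (0 : ℝ)) (𝓝 (Real.exp (Φ z₂ - Φ z₁) * L)) := by
  obtain rfl : μ = μ₀.tilted fun x => -Φ x := Measure.ext fun A hA => by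
    rw [hμ A hA, tilted_apply_eq_ofReal_integral' _ hA, integral_div]
  exact onsager_machlup_tilting_general hΦ.continuousAt hΦ.continuousAt hInt hball hlim
end

section
/- Onsager–Machlup function for a measure equivalent to a Gaussian (finite-dimensional case): Let γ be the standard Gaussian measure on E = EuclideanSpace ℝ (Fin d) (density (2π)^{−d/2} exp(−‖x‖²/2) with respect to Lebesgue measure). Let Φ : E → ℝ be locally Lipschitz (hence continuous and locally bounded) with 0 < ∫_E e^{−Φ} dγ < ∞, and define the probability measure μ by μ(A) = (∫_E e^{−Φ} dγ)^{−1} ∫_A e^{−Φ} dγ. Then for all z₁, z₂ ∈ E, lim_{ε→0⁺} μ(B_ε(z₁))/μ(B_ε(z₂)) = exp( (Φ(z₂) + ‖z₂‖²/2) − (Φ(z₁) + ‖z₁‖²/2) ). -/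
open MeasureTheory Filter Metric Set Topology Real

/-!
Reweighting any measure `ν` by a density proportional to `exp (-Φ)` adds `Φ` to its
Onsager–Machlup function: near a point of continuity of `Φ`, the reweighted mass of a small ball
is asymptotically its `ν`-mass times the value of the density at the centre. Lebesgue measure is
translation invariant, so it has Onsager–Machlup function `0`; reweighting it by the Gaussian
density adds `‖z‖ ^ 2 / 2`, and tilting the Gaussian by `-Φ` adds `Φ z`.
-/

section SmallBalls

theorem tendsto_ball_smallSets {X : Type*} [PseudoMetricSpace X] (z : X) :
    Tendsto (ball z) (𝓝 (0 : ℝ)) (𝓝 z).smallSets :=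
  tendsto_smallSets_iff.2 fun _ ht =>
    (eventually_closedBall_subset ht).mono fun _ => ball_subset_closedBall.trans

variable {X : Type*} [MeasurableSpace X]

theorem setLAverage_mem_Icc {ν : Measure X} {s : Set X} (hs : MeasurableSet s)
    (hpos : 0 < ν.real s) {f : X → ENNReal} {a b : ENNReal} (hf : ∀ x ∈ s, f x ∈ Icc a b) :
    ⨍⁻ x in s, f x ∂ν ∈ Icc a b := by
  obtain ⟨h0, htop⟩ := ENNReal.toReal_pos_iff.1 hpos
  rw [setLAverage_eq, mem_Icc, ENNReal.le_div_iff_mul_le (.inl h0.ne') (.inl htop.ne),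
    ENNReal.div_le_iff h0.ne' htop.ne, ← setLIntegral_const, ← setLIntegral_const]
  exact ⟨setLIntegral_mono' hs fun x hx => (hf x hx).1,
    setLIntegral_mono' hs fun x hx => (hf x hx).2⟩

theorem tendsto_setLAverage_of_continuousAt [TopologicalSpace X] {ν : Measure X}
    {f : X → ENNReal} {z : X} (hf : ContinuousAt f z) (hfz : f z ≠ ⊤)
    {ι : Type*} {l : Filter ι} {s : ι → Set X} (hs : Tendsto s l (𝓝 z).smallSets)
    (hmeas : ∀ᶠ i in l, MeasurableSet (s i)) (hpos : ∀ᶠ i in l, 0 < ν.real (s i)) :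
    Tendsto (fun i => ⨍⁻ x in s i, f x ∂ν) l (𝓝 (f z)) := by
  rw [(ENNReal.hasBasis_nhds_of_ne_top hfz).tendsto_right_iff]
  intro δ hδ
  have hIcc : ∀ᶠ x in 𝓝 z, f x ∈ Icc (f z - δ) (f z + δ) :=
    hf (ENNReal.Icc_mem_nhds hfz hδ.ne')
  filter_upwards [hs.eventually (eventually_smallSets_forall.2 hIcc), hmeas, hpos]
    with i hi hmi hpi
  exact setLAverage_mem_Icc hmi hpi hi

theorem toReal_setLAverage_eq_measureReal_withDensity_div (ν : Measure X) (f : X → ENNReal)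
    {s : Set X} (hs : MeasurableSet s) :
    (⨍⁻ x in s, f x ∂ν).toReal = (ν.withDensity f).real s / ν.real s := by
  rw [setLAverage_eq, ENNReal.toReal_div, measureReal_def, measureReal_def, withDensity_apply _ hs]

theorem tendsto_measureReal_withDensity_ball_div [PseudoMetricSpace X] [OpensMeasurableSpace X]
    {ν : Measure X} {f : X → ENNReal} {z : X} (hf : ContinuousAt f z) (hfz : f z ≠ ⊤)
    (hpos : ∀ᶠ ε in 𝓝[>] (0 : ℝ), 0 < ν.real (ball z ε)) :
    Tendsto (fun ε => (ν.withDensity f).real (ball z ε) / ν.real (ball z ε)) (𝓝[>] 0)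
      (𝓝 (f z).toReal) := by
  simp only [← toReal_setLAverage_eq_measureReal_withDensity_div ν f measurableSet_ball]
  exact (ENNReal.tendsto_toReal hfz).comp <| tendsto_setLAverage_of_continuousAt hf hfz
    ((tendsto_ball_smallSets z).mono_left nhdsWithin_le_nhds)
    (.of_forall fun _ => measurableSet_ball) hpos

end SmallBalls

section OnsagerMachlup

variable {X : Type*} [PseudoMetricSpace X] [MeasurableSpace X]

/-- `I` is an Onsager–Machlup function of `ν` on `s`: for centres in `s`, ratios of `ν`-masses of
balls of equal radius tend to `exp (I z₂ - I z₁)` as the radius shrinks. Masses are real-valued;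
balls of zero or infinite mass make the ratio `0`, which the positivity of the limit excludes for
small radii. -/
def IsOnsagerMachlupOn (ν : Measure X) (I : X → ℝ) (s : Set X) : Prop :=
  ∀ z₁ ∈ s, ∀ z₂ ∈ s, Tendsto (fun ε : ℝ => ν.real (ball z₁ ε) / ν.real (ball z₂ ε)) (𝓝[>] 0)
    (𝓝 (Real.exp (I z₂ - I z₁)))

theorem isOnsagerMachlupOn_zero_of_isAddHaarMeasure {E : Type*} [NormedAddCommGroup E]
    [MeasurableSpace E] [BorelSpace E] [ProperSpace E] (ν : Measure E) [ν.IsAddHaarMeasure]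
    (s : Set E) : IsOnsagerMachlupOn ν (fun _ => 0) s := by
  intro z₁ _ z₂ _
  rw [sub_self, Real.exp_zero]
  refine tendsto_const_nhds.congr' ?_
  filter_upwards [self_mem_nhdsWithin] with ε hε
  have hpos : 0 < ν.real (ball 0 ε) :=
    ENNReal.toReal_pos (measure_ball_pos _ _ hε).ne' measure_ball_lt_top.ne
  rw [Measure.addHaar_real_ball_center ν z₁, Measure.addHaar_real_ball_center ν z₂,
    div_self hpos.ne']

namespace IsOnsagerMachlupOn

variable {ν : Measure X} {I Φ : X → ℝ} {s : Set X}

theorem eventually_measureReal_ball_pos (h : IsOnsagerMachlupOn ν I s) {z : X} (hz : z ∈ s) :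
    ∀ᶠ ε in 𝓝[>] (0 : ℝ), 0 < ν.real (ball z ε) := by
  filter_upwards [(h z hz z hz).eventually_ne (Real.exp_ne_zero _)] with ε hε
  exact measureReal_nonneg.lt_of_ne' (div_ne_zero_iff.1 hε).1

theorem withDensity_mul_exp_neg [OpensMeasurableSpace X] (h : IsOnsagerMachlupOn ν I s)
    (hΦ : ∀ z ∈ s, ContinuousAt Φ z) {c : ℝ} (hc : 0 < c) :
    IsOnsagerMachlupOn (ν.withDensity fun x => ENNReal.ofReal (c * Real.exp (-Φ x)))
      (fun z => Φ z + I z) s := by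
  set ρ := ν.withDensity fun x => ENNReal.ofReal (c * Real.exp (-Φ x))
  have hdensity : ∀ z ∈ s, Tendsto (fun ε => ρ.real (ball z ε) / ν.real (ball z ε)) (𝓝[>] 0)
      (𝓝 (c * Real.exp (-Φ z))) := by
    intro z hz
    have hcont : ContinuousAt (fun x => ENNReal.ofReal (c * Real.exp (-Φ x))) z :=
      ENNReal.continuous_ofReal.continuousAt.comp ((hΦ z hz).neg.rexp.const_mul c)
    have hlim := tendsto_measureReal_withDensity_ball_div hcont ENNReal.ofReal_ne_top
      (h.eventually_measureReal_ball_pos hz)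
    rwa [ENNReal.toReal_ofReal (by positivity)] at hlim
  intro z₁ hz₁ z₂ hz₂
  have hlim := ((hdensity z₁ hz₁).div (hdensity z₂ hz₂) (by positivity)).mul (h z₁ hz₁ z₂ hz₂)
  have hvalue : c * Real.exp (-Φ z₁) / (c * Real.exp (-Φ z₂)) * Real.exp (I z₂ - I z₁) =
      Real.exp (Φ z₂ + I z₂ - (Φ z₁ + I z₁)) := by
    rw [mul_div_mul_left _ _ hc.ne', ← Real.exp_sub, ← Real.exp_add]
    ring_nf
  rw [hvalue] at hlim
  refine hlim.congr' ?_
  filter_upwards [h.eventually_measureReal_ball_pos hz₁, h.eventually_measureReal_ball_pos hz₂]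
    with ε h₁ h₂
  rw [Pi.div_apply, div_div_div_eq, div_mul_div_comm]
  field_simp

theorem tilted_neg [OpensMeasurableSpace X] (h : IsOnsagerMachlupOn ν I s)
    (hΦ : ∀ z ∈ s, ContinuousAt Φ z) (hpos : 0 < ∫ x, Real.exp (-Φ x) ∂ν) :
    IsOnsagerMachlupOn (ν.tilted fun x => -Φ x) (fun z => Φ z + I z) s := by
  simpa only [Measure.tilted, div_eq_inv_mul] using
    h.withDensity_mul_exp_neg hΦ (inv_pos.2 hpos)

end IsOnsagerMachlupOn

end OnsagerMachlup

theorem isOnsagerMachlupOn_withDensity_gaussian {E : Type*} [NormedAddCommGroup E]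
    [MeasurableSpace E] [BorelSpace E] [ProperSpace E] (ν : Measure E) [ν.IsAddHaarMeasure]
    {c : ℝ} (hc : 0 < c) (s : Set E) :
    IsOnsagerMachlupOn (ν.withDensity fun x => ENNReal.ofReal (c * Real.exp (-‖x‖ ^ 2 / 2)))
      (fun z => ‖z‖ ^ 2 / 2) s := by
  simpa only [neg_div, add_zero] using
    (isOnsagerMachlupOn_zero_of_isAddHaarMeasure ν s).withDensity_mul_exp_neg
      (Φ := fun x => ‖x‖ ^ 2 / 2) (fun _ _ => by fun_prop) hc

theorem eq_tilted_of_apply_eq_ofReal_integral_div {X : Type*} [MeasurableSpace X]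
    {ν ρ : Measure X} {f : X → ℝ}
    (h : ∀ A, MeasurableSet A →
      ρ A = ENNReal.ofReal ((∫ x in A, Real.exp (f x) ∂ν) / ∫ x, Real.exp (f x) ∂ν)) :
    ρ = ν.tilted f :=
  Measure.ext fun A hA => by
    rw [h A hA, tilted_apply_eq_ofReal_integral' f hA, integral_div]

theorem onsager_machlup_equivalent_gaussian_general {E : Type*} [NormedAddCommGroup E]
    [InnerProductSpace ℝ E] [FiniteDimensional ℝ E] [MeasurableSpace E] [BorelSpace E]
    {γ : Measure E}
    (hγ : γ = volume.withDensity (fun x => ENNReal.ofReal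
      ((2 * π) ^ (-(Module.finrank ℝ E : ℝ) / 2) * Real.exp (-‖x‖ ^ 2 / 2))))
    {Φ : E → ℝ} (hpos : 0 < ∫ x, Real.exp (-Φ x) ∂γ) :
    IsOnsagerMachlupOn (γ.tilted fun x => -Φ x) (fun z => Φ z + ‖z‖ ^ 2 / 2)
      {z | ContinuousAt Φ z} := by
  have : ProperSpace E := FiniteDimensional.proper_real E
  subst hγ
  exact (isOnsagerMachlupOn_withDensity_gaussian volume (by positivity) _).tilted_neg
    (fun _ hz => hz) hpos

/-- **Onsager–Machlup function for a measure equivalent to a Gaussian (finite dimensions).**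
If `μ` is obtained from the standard Gaussian `γ` on `ℝ^d` by tilting with `e^{-Φ}` for a
locally Lipschitz `Φ`, then the Onsager–Machlup function of `μ` is `z ↦ Φ z + ‖z‖²/2`. -/
theorem onsager_machlup_equivalent_gaussian (d : ℕ)
    (γ : Measure (EuclideanSpace ℝ (Fin d)))
    (hγ : γ = volume.withDensity
      (fun x => ENNReal.ofReal ((2 * π) ^ (-(d : ℝ) / 2) * Real.exp (-‖x‖ ^ 2 / 2))))
    (Φ : EuclideanSpace ℝ (Fin d) → ℝ) (hΦ : LocallyLipschitz Φ)
    (hInt : Integrable (fun x => Real.exp (-Φ x)) γ)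
    (hpos : 0 < ∫ x, Real.exp (-Φ x) ∂γ)
    (μ : Measure (EuclideanSpace ℝ (Fin d))) [IsProbabilityMeasure μ]
    (hμ : ∀ A : Set (EuclideanSpace ℝ (Fin d)), MeasurableSet A →
      μ A = ENNReal.ofReal ((∫ x in A, Real.exp (-Φ x) ∂γ) / ∫ x, Real.exp (-Φ x) ∂γ))
    (z₁ z₂ : EuclideanSpace ℝ (Fin d)) :
    Tendsto (fun ε : ℝ => (μ (ball z₁ ε)).toReal / (μ (ball z₂ ε)).toReal)
      (𝓝[>] (0 : ℝ))
      (𝓝 (Real.exp ((Φ z₂ + ‖z₂‖ ^ 2 / 2) - (Φ z₁ + ‖z₁‖ ^ 2 / 2)))) := by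
  rw [eq_tilted_of_apply_eq_ofReal_integral_div hμ]
  exact onsager_machlup_equivalent_gaussian_general (by rwa [finrank_euclideanSpace_fin]) hpos
    z₁ hΦ.continuous.continuousAt z₂ hΦ.continuous.continuousAt
end

section
/- Small-noise Laplace principle for one-dimensional Gaussians (motivating example): Let A ⊆ ℝ be a Borel set with positive Lebesgue measure. Then lim_{ε→0⁺} ε² log( (gaussianReal 0 ε²)(A) ) = − essInf_{x∈A} (x²/2), where the essential infimum is taken with respect to Lebesgue measure restricted to A (i.e., essInf of the function x ↦ x²/2 under the measure volume.restrict A). -/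
open MeasureTheory Filter Set Topology ProbabilityTheory NNReal

/-!
Write the Gaussian probability of `A` as `(2πv)^(-1/2) ∫_A exp (-φ / v)` with `φ x = (x - μ)² / 2`.
The prefactor is invisible at the scale `v log`, so the claim is an instance of Laplace's principle
`t⁻¹ log ∫ exp (-t φ) → -essInf φ`. For the latter, when `t ≥ s` the factor `exp (-(t - s) φ)` is at
most `exp (-(t - s) essInf φ)` almost everywhere, and for every `c > essInf φ` it is at least
`exp (-(t - s) c)` on the non-null set `{φ < c}`; the remaining factor `exp (-s φ)` is integrable
and does not depend on `t`.
-/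

section Laplace

variable {α : Type*} {mα : MeasurableSpace α} {ν : Measure α} {φ : α → ℝ} {s t c : ℝ}

lemma isCoboundedUnder_ge_of_countableInterFilter {ι β : Type*} [LinearOrder β] [Nonempty β]
    [(atTop : Filter β).IsCountablyGenerated] {l : Filter ι} [l.NeBot] [CountableInterFilter l]
    (u : ι → β) : l.IsCoboundedUnder (· ≥ ·) u := by
  obtain ⟨b, hb⟩ := exists_seq_tendsto (atTop : Filter β)
  obtain ⟨n, hn⟩ : ∃ n, ∃ᶠ x in l, u x ≤ b n := by
    by_contra! h
    obtain ⟨x, hx⟩ := (eventually_countable_forall.2 h).exists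
    obtain ⟨n, hn⟩ := (hb.eventually_ge_atTop (u x)).exists
    exact (hx n).not_ge hn
  exact .of_frequently_le hn

lemma restrict_lt_ne_zero_of_essInf_lt {β : Type*} [ConditionallyCompleteLinearOrder β]
    [(atTop : Filter β).IsCountablyGenerated] [NeZero ν] {f : α → β} {b : β}
    (hb : essInf f ν < b) : ν.restrict {x | f x < b} ≠ 0 := by
  have : Nonempty β := ⟨b⟩
  rw [Ne, Measure.restrict_eq_zero, ← Ne, ← frequently_ae_iff]
  exact frequently_lt_of_liminf_lt (isCoboundedUnder_ge_of_countableInterFilter f) hb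

lemma exp_neg_mul_eq_exp_sub_mul_exp (s t y : ℝ) :
    Real.exp (-(t * y)) = Real.exp (-((t - s) * y)) * Real.exp (-(s * y)) := by
  rw [← Real.exp_add]
  ring_nf

lemma exp_neg_mul_le_of_le {y : ℝ} (hst : s ≤ t) (hy : c ≤ y) :
    Real.exp (-(t * y)) ≤ Real.exp (-((t - s) * c)) * Real.exp (-(s * y)) := by
  rw [exp_neg_mul_eq_exp_sub_mul_exp s t y]
  have : 0 ≤ t - s := sub_nonneg.2 hst
  gcongr

lemma le_exp_neg_mul_of_le {y : ℝ} (hst : s ≤ t) (hy : y ≤ c) :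
    Real.exp (-((t - s) * c)) * Real.exp (-(s * y)) ≤ Real.exp (-(t * y)) := by
  rw [exp_neg_mul_eq_exp_sub_mul_exp s t y]
  have : 0 ≤ t - s := sub_nonneg.2 hst
  gcongr

lemma integrable_exp_neg_mul_of_le (hφ : AEMeasurable φ ν)
    (hint : Integrable (fun x => Real.exp (-(s * φ x))) ν) (hst : s ≤ t)
    (hc : ∀ᵐ x ∂ν, c ≤ φ x) : Integrable (fun x => Real.exp (-(t * φ x))) ν := by
  refine (hint.const_mul (Real.exp (-((t - s) * c)))).mono' (by fun_prop) ?_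
  filter_upwards [hc] with x hx
  rw [Real.norm_of_nonneg (Real.exp_nonneg _)]
  exact exp_neg_mul_le_of_le hst hx

lemma integral_exp_neg_mul_le (hint : Integrable (fun x => Real.exp (-(s * φ x))) ν)
    (hst : s ≤ t) (hc : ∀ᵐ x ∂ν, c ≤ φ x) :
    ∫ x, Real.exp (-(t * φ x)) ∂ν ≤
      Real.exp (-((t - s) * c)) * ∫ x, Real.exp (-(s * φ x)) ∂ν := by
  rw [← integral_const_mul]
  refine integral_mono_of_nonneg (ae_of_all _ fun _ => Real.exp_nonneg _) (hint.const_mul _) ?_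
  filter_upwards [hc] with x hx using exp_neg_mul_le_of_le hst hx

lemma le_integral_exp_neg_mul (hφ : AEMeasurable φ ν)
    (hint : Integrable (fun x => Real.exp (-(t * φ x))) ν) (hst : s ≤ t) :
    Real.exp (-((t - s) * c)) * ∫ x in {x | φ x < c}, Real.exp (-(s * φ x)) ∂ν ≤
      ∫ x, Real.exp (-(t * φ x)) ∂ν := by
  have hlt : ∀ᵐ x ∂ν.restrict {x | φ x < c}, φ x < c :=
    ae_restrict_mem₀ (nullMeasurableSet_lt hφ aemeasurable_const)
  calc Real.exp (-((t - s) * c)) * ∫ x in {x | φ x < c}, Real.exp (-(s * φ x)) ∂ν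
      = ∫ x in {x | φ x < c}, Real.exp (-((t - s) * c)) * Real.exp (-(s * φ x)) ∂ν :=
        (integral_const_mul _ _).symm
    _ ≤ ∫ x in {x | φ x < c}, Real.exp (-(t * φ x)) ∂ν := by
        refine integral_mono_of_nonneg (ae_of_all _ fun _ => by positivity) hint.restrict ?_
        filter_upwards [hlt] with x hx using le_exp_neg_mul_of_le hst hx.le
    _ ≤ ∫ x, Real.exp (-(t * φ x)) ∂ν :=
        setIntegral_le_integral hint (ae_of_all _ fun _ => Real.exp_nonneg _)

lemma tendsto_inv_mul_log_exp_neg_sub_mul {K : ℝ} (hK : 0 < K) (s c : ℝ) :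
    Tendsto (fun t => t⁻¹ * Real.log (Real.exp (-((t - s) * c)) * K)) atTop (𝓝 (-c)) := by
  have hlim : Tendsto (fun t : ℝ => -c + t⁻¹ * (s * c + Real.log K)) atTop (𝓝 (-c)) := by
    simpa only [zero_mul, add_zero] using (tendsto_inv_atTop_zero.mul_const _).const_add (-c)
  refine hlim.congr' ?_
  filter_upwards [eventually_ne_atTop 0] with t ht
  rw [Real.log_mul (Real.exp_ne_zero _) hK.ne', Real.log_exp]
  field_simp
  ring

theorem tendsto_inv_mul_log_integral_exp_neg_mul [NeZero ν] (hφ : AEMeasurable φ ν)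
    (hbdd : IsBoundedUnder (· ≥ ·) (ae ν) φ)
    (hint : Integrable (fun x => Real.exp (-(s * φ x))) ν) :
    Tendsto (fun t => t⁻¹ * Real.log (∫ x, Real.exp (-(t * φ x)) ∂ν)) atTop
      (𝓝 (-essInf φ ν)) := by
  have hinf : ∀ᵐ x ∂ν, essInf φ ν ≤ φ x := ae_essInf_le hbdd
  refine tendsto_order.2 ⟨fun a ha => ?_, fun a ha => ?_⟩
  · obtain ⟨b, hab, hb⟩ := exists_between ha
    have : NeZero (ν.restrict {x | φ x < -b}) := ⟨restrict_lt_ne_zero_of_essInf_lt (lt_neg.1 hb)⟩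
    have hK : 0 < ∫ x in {x | φ x < -b}, Real.exp (-(s * φ x)) ∂ν :=
      integral_exp_pos hint.restrict
    have hlim := tendsto_inv_mul_log_exp_neg_sub_mul hK s (-b)
    rw [neg_neg] at hlim
    filter_upwards [hlim.eventually_const_lt hab, eventually_ge_atTop s, eventually_ge_atTop 0]
      with t hat hst ht
    refine hat.trans_le ?_
    gcongr
    exact le_integral_exp_neg_mul hφ (integrable_exp_neg_mul_of_le hφ hint hst hinf) hst
  · have hlim := tendsto_inv_mul_log_exp_neg_sub_mul (integral_exp_pos hint) s (essInf φ ν)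
    filter_upwards [hlim.eventually_lt_const ha, eventually_ge_atTop s, eventually_ge_atTop 0]
      with t hta hst ht
    refine lt_of_le_of_lt ?_ hta
    have hpos : 0 < ∫ x, Real.exp (-(t * φ x)) ∂ν :=
      integral_exp_pos (integrable_exp_neg_mul_of_le hφ hint hst hinf)
    gcongr
    exact integral_exp_neg_mul_le hint hst hinf

end Laplace

section Gaussian

variable {v : ℝ≥0}

lemma integrable_exp_neg_mul_sq_sub_div_two {b : ℝ} (hb : 0 < b) (μ : ℝ) :
    Integrable fun x => Real.exp (-(b * ((x - μ) ^ 2 / 2))) := by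
  convert (integrable_exp_neg_mul_sq (half_pos hb)).comp_sub_right μ using 3
  ring

lemma toReal_gaussianReal_apply (μ : ℝ) (hv : v ≠ 0) (A : Set ℝ) :
    (gaussianReal μ v A).toReal =
      (√(2 * Real.pi * v))⁻¹ * ∫ x in A, Real.exp (-((v : ℝ)⁻¹ * ((x - μ) ^ 2 / 2))) := by
  rw [gaussianReal_apply_eq_integral μ hv, ENNReal.toReal_ofReal
    (integral_nonneg fun x => gaussianPDFReal_nonneg μ v x), ← integral_const_mul]
  congr with x
  rw [gaussianPDFReal]
  ring_nf

lemma log_toReal_gaussianReal_apply {A : Set ℝ} (μ : ℝ) (hv : v ≠ 0) (hA : volume A ≠ 0) :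
    Real.log (gaussianReal μ v A).toReal =
      Real.log (∫ x in A, Real.exp (-((v : ℝ)⁻¹ * ((x - μ) ^ 2 / 2)))) -
        Real.log (2 * Real.pi * v) / 2 := by
  have hv_pos : (0 : ℝ) < v := by positivity
  have : NeZero (volume.restrict A) := ⟨mt Measure.restrict_eq_zero.1 hA⟩
  have hpos : 0 < ∫ x in A, Real.exp (-((v : ℝ)⁻¹ * ((x - μ) ^ 2 / 2))) :=
    integral_exp_pos (integrable_exp_neg_mul_sq_sub_div_two (inv_pos.2 hv_pos) μ).restrict
  rw [toReal_gaussianReal_apply μ hv, Real.log_mul (by positivity) hpos.ne', Real.log_inv,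
    Real.log_sqrt (by positivity)]
  ring

lemma tendsto_mul_log_const_mul {a : ℝ} (ha : a ≠ 0) :
    Tendsto (fun x => x * Real.log (a * x)) (𝓝 0) (𝓝 0) := by
  have hcont : Continuous fun x => a⁻¹ * (a * x * Real.log (a * x)) := by
    have := Real.continuous_mul_log.comp (continuous_const_mul a)
    fun_prop
  refine (hcont.tendsto' 0 0 (by simp)).congr fun x => ?_
  field_simp

lemma tendsto_coe_pow_nhdsGT_zero {n : ℕ} (hn : n ≠ 0) :
    Tendsto (fun ε : ℝ≥0 => (ε : ℝ) ^ n) (𝓝[>] 0) (𝓝[>] 0) := by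
  have hcont : Continuous fun ε : ℝ≥0 => (ε : ℝ) ^ n := by fun_prop
  refine tendsto_nhdsWithin_iff.2 ⟨?_, ?_⟩
  · exact (hcont.tendsto' 0 0 (by simp [hn])).mono_left nhdsWithin_le_nhds
  · filter_upwards [self_mem_nhdsWithin] with ε hε using pow_pos (NNReal.coe_pos.2 hε) n

end Gaussian

theorem small_noise_laplace_principle_gaussianReal_general
    (μ : ℝ) (A : Set ℝ) (hpos : 0 < volume A) :
    Tendsto
      (fun ε : ℝ≥0 => (ε : ℝ) ^ 2 * Real.log ((gaussianReal μ (ε ^ 2)) A).toReal)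
      (𝓝[>] (0 : ℝ≥0))
      (𝓝 (-essInf (fun x : ℝ => (x - μ) ^ 2 / 2) (volume.restrict A))) := by
  have : NeZero (volume.restrict A) := ⟨mt Measure.restrict_eq_zero.1 hpos.ne'⟩
  have hsq := tendsto_coe_pow_nhdsGT_zero two_ne_zero
  have hbdd : IsBoundedUnder (· ≥ ·) (ae (volume.restrict A)) fun x => (x - μ) ^ 2 / 2 :=
    isBoundedUnder_of ⟨0, fun x => by positivity⟩
  have hint := (integrable_exp_neg_mul_sq_sub_div_two one_pos μ).restrict (s := A)
  have hlaplace := (tendsto_inv_mul_log_integral_exp_neg_mul (by fun_prop) hbdd hint).comp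
    (tendsto_inv_nhdsGT_zero.comp hsq)
  have hprefactor := ((tendsto_mul_log_const_mul Real.two_pi_pos.ne').comp
    (hsq.mono_right nhdsWithin_le_nhds)).div_const 2
  rw [zero_div] at hprefactor
  rw [← sub_zero (-essInf _ _)]
  refine (hlaplace.sub hprefactor).congr' ?_
  filter_upwards [self_mem_nhdsWithin] with ε hε
  rw [log_toReal_gaussianReal_apply μ (pow_pos hε 2).ne' hpos.ne']
  simp only [NNReal.coe_pow, Function.comp_apply, inv_inv]
  ring

/-- **Small-noise Laplace principle for one-dimensional Gaussians.**
For a Borel set `A ⊆ ℝ` of positive Lebesgue measure,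
`ε² log (gaussianReal 0 ε²) A → − essinf_{x ∈ A} x²/2` as `ε → 0⁺`. -/
theorem small_noise_laplace_principle_gaussianReal
    (A : Set ℝ) (hA : MeasurableSet A) (hpos : 0 < volume A) :
    Tendsto
      (fun ε : ℝ≥0 => (ε : ℝ) ^ 2 * Real.log ((gaussianReal 0 (ε ^ 2)) A).toReal)
      (𝓝[>] (0 : ℝ≥0))
      (𝓝 (-essInf (fun x : ℝ => x ^ 2 / 2) (volume.restrict A))) := by
  simpa only [sub_zero] using small_noise_laplace_principle_gaussianReal_general 0 A hpos
end

section
/- Finite-dimensional Schilder theorem (small-noise LDP for the Gaussian measure): Let γ be the standard Gaussian measure on E = EuclideanSpace ℝ (Fin d) and for ε > 0 let γ_ε be the pushforward of γ under x ↦ ε·x. Then the family (γ_ε) satisfies the large deviation principle with speed ε² and good rate function I(x) = ‖x‖²/2; that is: (i) for every closed set F ⊆ E, limsup_{ε→0⁺} ε² log γ_ε(F) ≤ − inf_{x∈F} ‖x‖²/2, and (ii) for every open set G ⊆ E, liminf_{ε→0⁺} ε² log γ_ε(G) ≥ − inf_{x∈G} ‖x‖²/2. -/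
open MeasureTheory Filter Metric Set Topology Real

/-- A family of Borel measures `(μ ε)_{ε>0}` satisfies the large deviation principle with
speed `ε²` and good rate function `I : X → EReal`: `I` is nonnegative, lower semicontinuous,
has compact sublevel sets, and the usual upper bound on closed sets and lower bound on open
sets hold (with `ε² log μ ε (·)` computed in the extended reals). -/
def HasLDP {X : Type*} [TopologicalSpace X] [MeasurableSpace X]
    (μ : ℝ → Measure X) (I : X → EReal) : Prop :=
  (∀ x, 0 ≤ I x) ∧
  LowerSemicontinuous I ∧
  (∀ c : ℝ, IsCompact {x | I x ≤ (c : EReal)}) ∧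
  (∀ F : Set X, IsClosed F →
    Filter.limsup (fun ε : ℝ => ((ε ^ 2 : ℝ) : EReal) * ENNReal.log (μ ε F))
      (𝓝[>] (0 : ℝ)) ≤ -⨅ x ∈ F, I x) ∧
  (∀ G : Set X, IsOpen G →
    -⨅ x ∈ G, I x ≤
      Filter.liminf (fun ε : ℝ => ((ε ^ 2 : ℝ) : EReal) * ENNReal.log (μ ε G))
        (𝓝[>] (0 : ℝ)))

/-!
For `ε > 0`, the change of variables `y = ε x` turns the image of `e^{-V} dx` under `x ↦ ε x`, where
`V` is homogeneous of degree two, into `ε^{-d} e^{-V/ε²} dy`. The prefactor is negligible on the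
scale `ε² log`, so the large deviation principle is Laplace's principle for `e^{-V/s}` as
`s = ε² → 0`: on a set where `V ≥ a` the integral of `e^{-V/s}` is at most a constant times
`e^{-a/s}`, and on a set of positive measure where `V ≤ a` it is at least a constant times
`e^{-a/s}`.
-/

open scoped ENNReal

/-- The Boltzmann weight `e^{-V/s}` of the energy `V` at temperature `s`, with values in `ℝ≥0∞` so
that it can serve as a density. -/
noncomputable def boltzmannWeight {X : Type*} (V : X → ℝ) (s : ℝ) (x : X) : ℝ≥0∞ :=
  ENNReal.ofReal (rexp (-(V x / s)))

section Laplace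

variable {ι : Type*} {l : Filter ι} {s : ι → ℝ} {k : ι → ℝ≥0∞}

lemma tendsto_coe_mul_log_const (hs : Tendsto s l (𝓝 0)) {C : ℝ≥0∞} (hC₀ : C ≠ 0) (hC : C ≠ ∞) :
    Tendsto (fun i ↦ (s i : EReal) * ENNReal.log C) l (𝓝 0) := by
  simp_rw [ENNReal.log_pos_real hC₀ hC, ← EReal.coe_mul, ← EReal.coe_zero, EReal.tendsto_coe]
  simpa using hs.mul_const (Real.log C.toReal)

lemma tendsto_coe_mul_log_mul_exp_neg_div (hs : Tendsto s l (𝓝[>] 0))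
    (hk : Tendsto (fun i ↦ (s i : EReal) * ENNReal.log (k i)) l (𝓝 0))
    {C : ℝ≥0∞} (hC₀ : C ≠ 0) (hC : C ≠ ∞) (a : ℝ) :
    Tendsto (fun i ↦ (s i : EReal) *
      ENNReal.log (k i * (C * ENNReal.ofReal (rexp (-(a / s i)))))) l (𝓝 ((-a : ℝ) : EReal)) := by
  have hconst := tendsto_coe_mul_log_const (hs.mono_right nhdsWithin_le_nhds) hC₀ hC
  have hsum : Tendsto (fun i ↦ (s i : EReal) * ENNReal.log (k i) +
      ((s i : EReal) * ENNReal.log C + ((-a : ℝ) : EReal))) l (𝓝 ((-a : ℝ) : EReal)) := by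
    have hCa := (EReal.continuousAt_add_coe_coe 0 (-a)).tendsto.comp
      (hconst.prodMk_nhds (tendsto_const_nhds (x := ((-a : ℝ) : EReal))))
    have hkCa := (EReal.continuousAt_add_coe_coe 0 (-a)).tendsto.comp
      (hk.prodMk_nhds (by simpa [Function.comp_def] using hCa))
    simpa [Function.comp_def] using hkCa
  refine hsum.congr' ?_
  filter_upwards [hs self_mem_nhdsWithin] with i (hi : 0 < s i)
  have distrib := EReal.left_distrib_of_nonneg_of_ne_top
    (EReal.coe_nonneg.2 hi.le) (EReal.coe_ne_top (s i))
  have hexp : (s i : EReal) * ((-(a / s i) : ℝ) : EReal) = ((-a : ℝ) : EReal) := by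
    rw [← EReal.coe_mul, mul_neg, mul_div_cancel₀ _ hi.ne']
  rw [ENNReal.log_mul_add, ENNReal.log_mul_add, ENNReal.log_ofReal_of_pos (exp_pos _),
    Real.log_exp, distrib, distrib, hexp]

variable {X : Type*} [MeasurableSpace X] {ν : Measure X} {V : X → ℝ} {A : Set X} {a : ℝ}

-- In `e^{-V/t} = e^{-(1/t - 1) V} e^{-V}` only the first factor is bounded using `a ≤ V`; the
-- second one is kept because `ν` may be infinite.
lemma setLIntegral_boltzmannWeight_le (hA : MeasurableSet A) (ha : ∀ x ∈ A, a ≤ V x)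
    {t : ℝ} (ht₀ : 0 < t) (ht₁ : t ≤ 1) :
    ∫⁻ x in A, boltzmannWeight V t x ∂ν ≤
      (ENNReal.ofReal (rexp a) * ∫⁻ x, boltzmannWeight V 1 x ∂ν) *
        ENNReal.ofReal (rexp (-(a / t))) := by
  have hpointwise : ∀ x ∈ A, boltzmannWeight V t x ≤
      ENNReal.ofReal (rexp a * rexp (-(a / t))) * boltzmannWeight V 1 x := fun x hx ↦ by
    rw [boltzmannWeight, boltzmannWeight, ← ENNReal.ofReal_mul (by positivity), ← Real.exp_add,
      ← Real.exp_add]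
    have ht : 0 ≤ 1 / t - 1 := sub_nonneg.2 (one_le_one_div ht₀ ht₁)
    gcongr
    linear_combination (1 / t - 1) * ha x hx
  calc ∫⁻ x in A, boltzmannWeight V t x ∂ν
      ≤ ∫⁻ x in A, ENNReal.ofReal (rexp a * rexp (-(a / t))) * boltzmannWeight V 1 x ∂ν :=
        setLIntegral_mono' hA hpointwise
    _ ≤ ∫⁻ x, ENNReal.ofReal (rexp a * rexp (-(a / t))) * boltzmannWeight V 1 x ∂ν :=
        setLIntegral_le_lintegral _ _
    _ = _ := by
        rw [lintegral_const_mul' _ _ ENNReal.ofReal_ne_top, ENNReal.ofReal_mul (by positivity),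
          mul_right_comm]

lemma le_setLIntegral_boltzmannWeight (hA : MeasurableSet A) (ha : ∀ x ∈ A, V x ≤ a)
    {t : ℝ} (ht : 0 ≤ t) :
    ν A * ENNReal.ofReal (rexp (-(a / t))) ≤ ∫⁻ x in A, boltzmannWeight V t x ∂ν := by
  rw [mul_comm, ← setLIntegral_const]
  refine setLIntegral_mono' hA fun x hx ↦ ENNReal.ofReal_le_ofReal ?_
  gcongr
  exact ha x hx

variable [l.NeBot]

lemma limsup_mul_log_setLIntegral_boltzmannWeight_le (hs : Tendsto s l (𝓝[>] 0))
    (hk : Tendsto (fun i ↦ (s i : EReal) * ENNReal.log (k i)) l (𝓝 0))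
    (hV : ∫⁻ x, boltzmannWeight V 1 x ∂ν ≠ ∞) (hA : MeasurableSet A) (ha : ∀ x ∈ A, a ≤ V x) :
    limsup (fun i ↦ (s i : EReal) * ENNReal.log (k i * ∫⁻ x in A, boltzmannWeight V (s i) x ∂ν)) l
      ≤ ((-a : ℝ) : EReal) := by
  set C := ENNReal.ofReal (rexp a) * ∫⁻ x, boltzmannWeight V 1 x ∂ν
  have hC : max C 1 ≠ ∞ := max_ne_top (ENNReal.mul_ne_top ENNReal.ofReal_ne_top hV) (by simp)
  rw [← (tendsto_coe_mul_log_mul_exp_neg_div hs hk (by positivity) hC a).limsup_eq]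
  refine limsup_le_limsup ?_
  filter_upwards [hs (Ioc_mem_nhdsGT one_pos)] with i ⟨hi₀, hi₁⟩
  refine mul_le_mul_of_nonneg_left ?_ (EReal.coe_nonneg.2 hi₀.le)
  gcongr
  exact (setLIntegral_boltzmannWeight_le hA ha hi₀ hi₁).trans (by gcongr; exact le_max_left C 1)

lemma le_liminf_mul_log_setLIntegral_boltzmannWeight (hs : Tendsto s l (𝓝[>] 0))
    (hk : Tendsto (fun i ↦ (s i : EReal) * ENNReal.log (k i)) l (𝓝 0))
    (hA : MeasurableSet A) (hA₀ : ν A ≠ 0) (ha : ∀ x ∈ A, V x ≤ a) :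
    ((-a : ℝ) : EReal) ≤ liminf (fun i ↦
      (s i : EReal) * ENNReal.log (k i * ∫⁻ x in A, boltzmannWeight V (s i) x ∂ν)) l := by
  have hC : min (ν A) 1 ≠ ∞ := ((min_le_right _ _).trans_lt ENNReal.one_lt_top).ne
  have hC₀ : min (ν A) 1 ≠ 0 := (lt_min (pos_iff_ne_zero.2 hA₀) one_pos).ne'
  rw [← (tendsto_coe_mul_log_mul_exp_neg_div hs hk hC₀ hC a).liminf_eq]
  refine liminf_le_liminf ?_
  filter_upwards [hs self_mem_nhdsWithin] with i (hi : 0 < s i)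
  refine mul_le_mul_of_nonneg_left ?_ (EReal.coe_nonneg.2 hi.le)
  gcongr
  exact le_trans (by gcongr; exact min_le_left _ _)
    (le_setLIntegral_boltzmannWeight hA ha hi.le)

end Laplace

lemma tendsto_sq_nhdsGT_zero : Tendsto (fun ε : ℝ ↦ ε ^ 2) (𝓝[>] 0) (𝓝[>] 0) := by
  refine tendsto_nhdsWithin_iff.2 ⟨?_, ?_⟩
  · exact ((continuous_pow 2).tendsto' 0 0 (by simp)).mono_left nhdsWithin_le_nhds
  · filter_upwards [self_mem_nhdsWithin] with ε (hε : 0 < ε) using pow_pos hε 2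

lemma tendsto_sq_mul_log_abs_inv_pow (n : ℕ) :
    Tendsto (fun ε : ℝ ↦ ((ε ^ 2 : ℝ) : EReal) * ENNReal.log (ENNReal.ofReal |(ε ^ n)⁻¹|))
      (𝓝[>] 0) (𝓝 0) := by
  have hreal : Tendsto (fun ε : ℝ ↦ -n * (Real.log ε * ε ^ (2 : ℝ))) (𝓝[>] 0) (𝓝 0) := by
    simpa using (tendsto_log_mul_rpow_nhdsGT_zero two_pos).const_mul (-n : ℝ)
  refine (EReal.tendsto_coe.2 hreal).congr' ?_
  filter_upwards [self_mem_nhdsWithin] with ε (hε : 0 < ε)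
  rw [ENNReal.log_ofReal_of_pos (by positivity), Real.log_abs, Real.log_inv, Real.log_pow,
    ← EReal.coe_mul, Real.rpow_two]
  ring_nf

section LDP

variable {X : Type*} [TopologicalSpace X] [MeasurableSpace X]

lemma HasLDP.congr' {μ ν : ℝ → Measure X} {I : X → EReal} (hμ : HasLDP μ I)
    (h : μ =ᶠ[𝓝[>] 0] ν) : HasLDP ν I := by
  have hlog (A : Set X) : (fun ε : ℝ ↦ ((ε ^ 2 : ℝ) : EReal) * ENNReal.log (μ ε A))
      =ᶠ[𝓝[>] 0] fun ε ↦ ((ε ^ 2 : ℝ) : EReal) * ENNReal.log (ν ε A) :=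
    h.mono fun ε hε ↦ by simp only [hε]
  obtain ⟨nonneg, lsc, compact, upper, lower⟩ := hμ
  exact ⟨nonneg, lsc, compact, fun F hF ↦ limsup_congr (hlog F) ▸ upper F hF,
    fun G hG ↦ liminf_congr (hlog G) ▸ lower G hG⟩

theorem hasLDP_smul_withDensity_boltzmannWeight [OpensMeasurableSpace X] {ν : Measure X}
    [ν.IsOpenPosMeasure] {V : X → ℝ} {k : ℝ → ℝ≥0∞} (hV : Continuous V) (hV₀ : ∀ x, 0 ≤ V x)
    (hVc : ∀ c, IsCompact {x | V x ≤ c}) (hVν : ∫⁻ x, boltzmannWeight V 1 x ∂ν ≠ ∞)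
    (hk : Tendsto (fun ε : ℝ ↦ ((ε ^ 2 : ℝ) : EReal) * ENNReal.log (k ε)) (𝓝[>] 0) (𝓝 0)) :
    HasLDP (fun ε ↦ k ε • ν.withDensity (boltzmannWeight V (ε ^ 2))) (fun x ↦ (V x : EReal)) := by
  refine ⟨fun x ↦ EReal.coe_nonneg.2 (hV₀ x),
    (continuous_coe_real_ereal.comp hV).lowerSemicontinuous, by simpa using hVc,
    fun F hF ↦ ?_, fun G hG ↦ ?_⟩
  · simp only [Measure.smul_apply, smul_eq_mul, withDensity_apply _ hF.measurableSet]
    rw [EReal.le_neg]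
    refine EReal.ge_of_forall_gt_iff_ge.1 fun a ha ↦ ?_
    rw [EReal.le_neg, ← EReal.coe_neg]
    exact limsup_mul_log_setLIntegral_boltzmannWeight_le tendsto_sq_nhdsGT_zero hk hVν
      hF.measurableSet fun x hx ↦ EReal.coe_le_coe_iff.1 (ha.le.trans (iInf₂_le x hx))
  · simp only [Measure.smul_apply, smul_eq_mul, withDensity_apply _ hG.measurableSet]
    rw [EReal.neg_le]
    refine le_iInf₂ fun x hx ↦ EReal.le_of_forall_lt_iff_le.1 fun a ha ↦ ?_
    rw [EReal.neg_le, ← EReal.coe_neg]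
    have hU : IsOpen (G ∩ {y | V y < a}) := hG.inter (isOpen_lt hV continuous_const)
    have hU₀ : ν (G ∩ {y | V y < a}) ≠ 0 := hU.measure_ne_zero ν ⟨x, hx, EReal.coe_lt_coe_iff.1 ha⟩
    refine (le_liminf_mul_log_setLIntegral_boltzmannWeight tendsto_sq_nhdsGT_zero hk
      hU.measurableSet hU₀ fun y hy ↦ hy.2.le).trans (liminf_le_liminf (.of_forall fun ε ↦ ?_))
    refine mul_le_mul_of_nonneg_left ?_ (EReal.coe_nonneg.2 (sq_nonneg ε))
    gcongr
    exact inter_subset_left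

end LDP

lemma integrable_exp_neg_mul_norm_sq {E : Type*} [NormedAddCommGroup E] [NormedSpace ℝ E]
    [FiniteDimensional ℝ E] [MeasurableSpace E] [BorelSpace E] (μ : Measure E)
    [μ.IsAddHaarMeasure] {b : ℝ} (hb : 0 < b) : Integrable (fun x ↦ rexp (-b * ‖x‖ ^ 2)) μ := by
  rcases subsingleton_or_nontrivial E with _ | _
  · exact .of_finite
  · refine (integrable_fun_norm_addHaar μ (f := fun r ↦ rexp (-b * r ^ 2))).2 ?_
    have hexponent : -1 < ((Module.finrank ℝ E - 1 : ℕ) : ℝ) :=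
      neg_one_lt_zero.trans_le (Nat.cast_nonneg _)
    simpa using integrableOn_rpow_mul_exp_neg_mul_sq hb hexponent

lemma map_smul_withDensity_addHaar {E : Type*} [NormedAddCommGroup E] [NormedSpace ℝ E]
    [FiniteDimensional ℝ E] [MeasurableSpace E] [BorelSpace E] (μ : Measure E)
    [μ.IsAddHaarMeasure] {f : E → ℝ≥0∞} (hf : Measurable f) {r : ℝ} (hr : r ≠ 0) :
    (μ.withDensity f).map (r • ·) = ENNReal.ofReal |(r ^ Module.finrank ℝ E)⁻¹| •
      μ.withDensity (fun x ↦ f (r⁻¹ • x)) := by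
  ext A hA
  have hsmul : Measurable (r • · : E → E) := measurable_const_smul r
  rw [Measure.map_apply hsmul hA, withDensity_apply _ (hsmul hA), ← withDensity_smul_measure,
    ← Measure.map_addHaar_smul μ hr, withDensity_apply _ hA,
    setLIntegral_map hA (by fun_prop) hsmul]
  simp only [inv_smul_smul₀ hr]

section Homogeneous

variable {E : Type*} [NormedAddCommGroup E] [NormedSpace ℝ E] [FiniteDimensional ℝ E] {V : E → ℝ}

lemma exists_pos_forall_mul_norm_sq_le (hV : Continuous V) (hV_pos : ∀ x ≠ 0, 0 < V x)
    (hV_smul : ∀ r > (0 : ℝ), ∀ x, V (r • x) = r ^ 2 * V x) :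
    ∃ m > 0, ∀ x, m * ‖x‖ ^ 2 ≤ V x := by
  have := FiniteDimensional.proper ℝ E
  obtain ⟨m, hm, hsphere⟩ := (isCompact_sphere (0 : E) 1).exists_forall_le' hV.continuousOn
    fun x hx ↦ hV_pos x (ne_zero_of_mem_unit_sphere ⟨x, hx⟩)
  refine ⟨m, hm, fun x ↦ ?_⟩
  rcases eq_or_ne x 0 with rfl | hx
  · have hzero := hV_smul 2 two_pos 0
    rw [smul_zero] at hzero
    rw [norm_zero]
    linarith
  · have hx' : 0 < ‖x‖ := norm_pos_iff.2 hx
    calc m * ‖x‖ ^ 2 ≤ V (‖x‖⁻¹ • x) * ‖x‖ ^ 2 := by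
          gcongr
          exact hsphere _ (by simp [norm_smul, hx'.ne'])
      _ = V x := by
          rw [mul_comm, ← hV_smul _ hx', smul_inv_smul₀ hx'.ne']

lemma isCompact_setOf_le_of_mul_norm_sq_le (hV : Continuous V) {m : ℝ} (hm : 0 < m)
    (hmV : ∀ x, m * ‖x‖ ^ 2 ≤ V x) (c : ℝ) : IsCompact {x | V x ≤ c} := by
  have := FiniteDimensional.proper ℝ E
  refine (isCompact_closedBall (0 : E) √(c / m)).of_isClosed_subset
    (isClosed_le hV continuous_const) fun x (hx : V x ≤ c) ↦ ?_
  rw [mem_closedBall_zero_iff]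
  exact Real.le_sqrt_of_sq_le ((le_div_iff₀' hm).2 ((hmV x).trans hx))

variable [MeasurableSpace E] [BorelSpace E] (μ : Measure E) [μ.IsAddHaarMeasure]

lemma lintegral_boltzmannWeight_one_ne_top {m : ℝ} (hm : 0 < m)
    (hmV : ∀ x, m * ‖x‖ ^ 2 ≤ V x) : ∫⁻ x, boltzmannWeight V 1 x ∂μ ≠ ∞ := by
  refine ne_top_of_le_ne_top (integrable_exp_neg_mul_norm_sq μ hm).lintegral_lt_top.ne
    (lintegral_mono fun x ↦ ENNReal.ofReal_le_ofReal ?_)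
  rw [div_one, neg_mul]
  gcongr
  exact hmV x

theorem hasLDP_map_smul_withDensity_boltzmannWeight (hV : Continuous V)
    (hV_pos : ∀ x ≠ 0, 0 < V x) (hV_smul : ∀ r > (0 : ℝ), ∀ x, V (r • x) = r ^ 2 * V x) :
    HasLDP (fun ε ↦ (μ.withDensity (boltzmannWeight V 1)).map (ε • ·))
      (fun x ↦ (V x : EReal)) := by
  obtain ⟨m, hm, hmV⟩ := exists_pos_forall_mul_norm_sq_le hV hV_pos hV_smul
  refine (hasLDP_smul_withDensity_boltzmannWeight hV
    (fun x ↦ (by positivity : 0 ≤ m * ‖x‖ ^ 2).trans (hmV x))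
    (isCompact_setOf_le_of_mul_norm_sq_le hV hm hmV)
    (lintegral_boltzmannWeight_one_ne_top μ hm hmV)
    (tendsto_sq_mul_log_abs_inv_pow (Module.finrank ℝ E))).congr' ?_
  filter_upwards [self_mem_nhdsWithin] with ε (hε : 0 < ε)
  have hweight : boltzmannWeight V (ε ^ 2) = fun x ↦ boltzmannWeight V 1 (ε⁻¹ • x) := by
    ext x
    rw [boltzmannWeight, boltzmannWeight, hV_smul _ (inv_pos.2 hε), div_one, inv_pow,
      inv_mul_eq_div]
  have hmeas : Measurable (boltzmannWeight V 1) := by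
    unfold boltzmannWeight
    fun_prop
  rw [map_smul_withDensity_addHaar μ hmeas hε.ne', hweight]

theorem schilder_finite_dimensional_general (hV : Continuous V) (hV_pos : ∀ x ≠ 0, 0 < V x)
    (hV_smul : ∀ r > (0 : ℝ), ∀ x, V (r • x) = r ^ 2 * V x) {c : ℝ} (hc : 0 < c) :
    HasLDP (fun ε ↦ (μ.withDensity fun x ↦ ENNReal.ofReal (c * rexp (-V x))).map (ε • ·))
      (fun x ↦ (V x : EReal)) := by
  have hHaar : (ENNReal.ofReal c • μ).IsAddHaarMeasure :=
    .smul μ (ENNReal.ofReal_pos.2 hc).ne' ENNReal.ofReal_ne_top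
  have hdensity : μ.withDensity (fun x ↦ ENNReal.ofReal (c * rexp (-V x))) =
      (ENNReal.ofReal c • μ).withDensity (boltzmannWeight V 1) := by
    rw [withDensity_smul_measure, ← withDensity_smul' _ _ ENNReal.ofReal_ne_top]
    congr with x
    simp [boltzmannWeight, ENNReal.ofReal_mul hc.le]
  rw [hdensity]
  exact hasLDP_map_smul_withDensity_boltzmannWeight _ hV hV_pos hV_smul

end Homogeneous

/-- **Finite-dimensional Schilder theorem.** The scalings `γ_ε` of the standard Gaussian
measure on `ℝ^d` satisfy the LDP with speed `ε²` and good rate function `x ↦ ‖x‖²/2`. -/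
theorem schilder_finite_dimensional (d : ℕ)
    (γ : Measure (EuclideanSpace ℝ (Fin d)))
    (hγ : γ = volume.withDensity
      (fun x => ENNReal.ofReal ((2 * π) ^ (-(d : ℝ) / 2) * Real.exp (-‖x‖ ^ 2 / 2)))) :
    HasLDP (fun ε : ℝ => Measure.map (fun x => ε • x) γ)
      (fun x => ((‖x‖ ^ 2 / 2 : ℝ) : EReal)) := by
  simp only [hγ, neg_div]
  exact schilder_finite_dimensional_general volume (by fun_prop) (fun x hx ↦ by positivity)
    (fun r _ x ↦ by rw [norm_smul, mul_pow, Real.norm_eq_abs, sq_abs, mul_div_assoc])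
    (by positivity)
end

section
/- ε-dependent tilting lemma: Let B be a Banach space and (μ₀^ε)_{ε>0} a family of Borel probability measures on B that is exponentially tight and satisfies the LDP with speed ε² and good rate function I₀ : B → [0,∞]. For ε > 0 let F^ε : B → ℝ admit the expansion F^ε(y) = F₀(y) + ε F₁(y) + (ε²/2) F₂(y) + ⋯ + (ε^{n−1}/(n−1)!) F_{n−1}(y) + εⁿ R_n(ε, y), where F₀ is continuous, lim_{ε→0⁺} R_n(ε, y) = 0 for every y ∈ B, and for every index 0 ≤ i ≤ n−1 and every γ > 0, limsup_{ε→0⁺} ε² log ∫_B exp( γ max{ |F_i(y)|, |R_n(ε, y)| } / ε² ) dμ₀^ε(y) < ∞. Suppose Z_ε := ∫_B exp(−F^ε(y)/ε²) dμ₀^ε(y) ∈ (0,∞), define μ^ε(A) = Z_ε^{−1} ∫_A exp(−F^ε(y)/ε²) dμ₀^ε(y), and assume (μ^ε) is exponentially tight. Then (μ^ε) satisfies the LDP with speed ε² and good rate function I(y) = I₀(y) + F₀(y) − inf_{z∈B} { F₀(z) + I₀(z) }. -/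
open MeasureTheory Filter Metric Set Topology

/-- A family of Borel measures `(μ ε)_{ε>0}` is exponentially tight (at speed `ε²`). -/
def ExpTight {X : Type*} [TopologicalSpace X] [MeasurableSpace X]
    (μ : ℝ → Measure X) : Prop :=
  ∀ α : ℝ, 0 < α → ∃ K : Set X, IsCompact K ∧
    Filter.limsup (fun ε : ℝ => ((ε ^ 2 : ℝ) : EReal) * ENNReal.log (μ ε Kᶜ))
      (𝓝[>] (0 : ℝ)) ≤ ((-α : ℝ) : EReal)

/-!
By the expansion, `|F^ε - F₀| ≤ ε S^ε` for `ε ≤ 1`, where `S^ε = ∑ max (|F_i|) (|R_n(ε, ·)|)` has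
exponential moments of all orders at speed `ε²`. Chernoff's bound then makes `{|F^ε - F₀| > δ}`
superexponentially negligible, both for `μ₀^ε` and for the measures weighted by `exp (-F^ε / ε²)`,
so that in exponential estimates `F^ε` may be replaced by `F₀`. The Laplace asymptotics of
`∫_A exp (-F^ε / ε²) dμ₀^ε` follow as in Varadhan's lemma: local estimates from the continuity of
`F₀` and the lower semicontinuity of `I₀`, and a finite cover of a compact sublevel set of `I₀`
whose complement is negligible. Dividing by `Z_ε` subtracts `inf (F₀ + I₀)` from the rate. The rate
is good because `F₀` is bounded below wherever `F₀ + I₀` is bounded above, so that sublevel sets of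
`F₀ + I₀` lie in sublevel sets of `I₀`.
-/

/-- The exponential scale `exp (c / ε²)` against which quantities are compared at speed `ε²`. It is
written exactly as the densities of the tilted measures are. -/
noncomputable def expScale (c ε : ℝ) : ENNReal := ENNReal.ofReal (Real.exp (c / ε ^ 2))

section ExpScale

lemma expScale_pos (c ε : ℝ) : 0 < expScale c ε := ENNReal.ofReal_pos.2 (Real.exp_pos _)

lemma expScale_ne_top (c ε : ℝ) : expScale c ε ≠ ⊤ := ENNReal.ofReal_ne_top

lemma expScale_zero (ε : ℝ) : expScale 0 ε = 1 := by simp [expScale]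

lemma expScale_add (a b ε : ℝ) : expScale (a + b) ε = expScale a ε * expScale b ε := by
  rw [expScale, add_div, Real.exp_add, ENNReal.ofReal_mul (Real.exp_nonneg _)]
  rfl

lemma expScale_mono (ε : ℝ) : Monotone (expScale · ε) := fun _ _ hab =>
  ENNReal.ofReal_le_ofReal (Real.exp_le_exp.2 (div_le_div_of_nonneg_right hab (sq_nonneg ε)))

lemma measurable_expScale_comp {X : Type*} [MeasurableSpace X] {f : X → ℝ} (hf : Measurable f)
    (ε : ℝ) : Measurable fun y => expScale (f y) ε := by
  unfold expScale
  fun_prop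

lemma expScale_div (a b ε : ℝ) : expScale a ε / expScale b ε = expScale (a - b) ε := by
  rw [eq_comm, ENNReal.eq_div_iff (expScale_pos b ε).ne' (expScale_ne_top b ε), ← expScale_add,
    add_sub_cancel]

lemma log_expScale (c ε : ℝ) : ENNReal.log (expScale c ε) = (c : EReal) / (ε ^ 2 : ℝ) := by
  rw [expScale, ← EReal.exp_coe, EReal.log_exp, EReal.coe_div]

lemma sq_mul_log_le_iff {ε : ℝ} (hε : 0 < ε) {a : ENNReal} {c : ℝ} :
    ((ε ^ 2 : ℝ) : EReal) * ENNReal.log a ≤ c ↔ a ≤ expScale c ε := by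
  rw [← ENNReal.log_le_log_iff, log_expScale,
    EReal.le_div_iff_mul_le (by exact_mod_cast pow_pos hε 2) (EReal.coe_ne_top _), mul_comm]

lemma le_sq_mul_log_iff {ε : ℝ} (hε : 0 < ε) {a : ENNReal} {c : ℝ} :
    (c : EReal) ≤ ((ε ^ 2 : ℝ) : EReal) * ENNReal.log a ↔ expScale c ε ≤ a := by
  rw [← ENNReal.log_le_log_iff, log_expScale,
    EReal.div_le_iff_le_mul (by exact_mod_cast pow_pos hε 2) (EReal.coe_ne_top _)]

lemma le_of_expScale_le_expScale {ε a b : ℝ} (hε : 0 < ε) (h : expScale a ε ≤ expScale b ε) :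
    a ≤ b := by
  rw [← sq_mul_log_le_iff hε] at h
  exact_mod_cast ((le_sq_mul_log_iff hε).2 le_rfl).trans h

lemma eventually_zero_lt_nhdsGT : ∀ᶠ ε : ℝ in 𝓝[>] (0 : ℝ), 0 < ε := self_mem_nhdsWithin

lemma limsup_sq_mul_log_le_iff {a : ℝ → ENNReal} {J : EReal} :
    limsup (fun ε : ℝ => ((ε ^ 2 : ℝ) : EReal) * ENNReal.log (a ε)) (𝓝[>] (0 : ℝ)) ≤ J ↔
      ∀ c : ℝ, J < c → ∀ᶠ ε in 𝓝[>] (0 : ℝ), a ε ≤ expScale c ε := by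
  constructor
  · intro h c hc
    filter_upwards [eventually_zero_lt_nhdsGT, eventually_lt_of_limsup_lt (h.trans_lt hc)]
      with ε hε hlt
    exact (sq_mul_log_le_iff hε).1 hlt.le
  · intro h
    refine EReal.le_of_forall_lt_iff_le.1 fun c hc => limsup_le_of_le (by isBoundedDefault) ?_
    filter_upwards [eventually_zero_lt_nhdsGT, h c hc] with ε hε hle
    exact (sq_mul_log_le_iff hε).2 hle

lemma le_liminf_sq_mul_log_iff {a : ℝ → ENNReal} {J : EReal} :
    J ≤ liminf (fun ε : ℝ => ((ε ^ 2 : ℝ) : EReal) * ENNReal.log (a ε)) (𝓝[>] (0 : ℝ)) ↔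
      ∀ c : ℝ, c < J → ∀ᶠ ε in 𝓝[>] (0 : ℝ), expScale c ε ≤ a ε := by
  constructor
  · intro h c hc
    filter_upwards [eventually_zero_lt_nhdsGT, eventually_lt_of_lt_liminf (hc.trans_le h)]
      with ε hε hlt
    exact (le_sq_mul_log_iff hε).1 hlt.le
  · intro h
    refine EReal.ge_of_forall_gt_iff_ge.1 fun c hc => le_liminf_of_le (by isBoundedDefault) ?_
    filter_upwards [eventually_zero_lt_nhdsGT, h c hc] with ε hε hle
    exact (le_sq_mul_log_iff hε).2 hle

lemma eventually_two_mul_expScale_le {c c' : ℝ} (h : c < c') :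
    ∀ᶠ ε in 𝓝[>] (0 : ℝ), 2 * expScale c ε ≤ expScale c' ε := by
  have hinv : Tendsto (fun ε : ℝ => (c' - c) * (ε⁻¹ ^ 2)) (𝓝[>] 0) atTop :=
    ((tendsto_pow_atTop two_ne_zero).comp tendsto_inv_nhdsGT_zero).const_mul_atTop (sub_pos.2 h)
  filter_upwards [hinv.eventually_ge_atTop 1] with ε hε
  have htwo : (2 : ENNReal) ≤ expScale (c' - c) ε := by
    rw [← ENNReal.ofReal_ofNat]
    refine ENNReal.ofReal_le_ofReal ?_
    have := Real.add_one_le_exp ((c' - c) / ε ^ 2)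
    rw [inv_pow, ← div_eq_mul_inv] at hε
    linarith
  calc 2 * expScale c ε ≤ expScale (c' - c) ε * expScale c ε := by gcongr
    _ = expScale c' ε := by rw [← expScale_add, sub_add_cancel]

lemma eventually_add_le_expScale {a b : ℝ → ENNReal} {c c' : ℝ}
    (ha : ∀ᶠ ε in 𝓝[>] (0 : ℝ), a ε ≤ expScale c ε)
    (hb : ∀ᶠ ε in 𝓝[>] (0 : ℝ), b ε ≤ expScale c ε) (h : c < c') :
    ∀ᶠ ε in 𝓝[>] (0 : ℝ), a ε + b ε ≤ expScale c' ε := by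
  filter_upwards [ha, hb, eventually_two_mul_expScale_le h] with ε ha hb hc
  exact (add_le_add ha hb).trans ((two_mul _).symm.trans_le hc)

end ExpScale

section EReal

lemma coe_add_lt_coe_iff {f t : ℝ} {i : EReal} : (f : EReal) + i < t ↔ i < (t - f : ℝ) := by
  rw [EReal.coe_sub, EReal.lt_sub_iff_add_lt (by simp) (by simp), add_comm]

lemma coe_lt_coe_add_iff {f t : ℝ} {i : EReal} : (t : EReal) < f + i ↔ (t - f : ℝ) < i := by
  rw [EReal.coe_sub, EReal.sub_lt_iff (by simp) (by simp), add_comm]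

lemma coe_sub_add_lt_coe_iff {f m t : ℝ} {i : EReal} :
    ((f - m : ℝ) : EReal) + i < t ↔ (f : EReal) + i < (t + m : ℝ) := by
  rw [coe_add_lt_coe_iff, coe_add_lt_coe_iff, sub_sub_eq_add_sub]

lemma coe_lt_coe_sub_add_iff {f m t : ℝ} {i : EReal} :
    (t : EReal) < ((f - m : ℝ) : EReal) + i ↔ ((t + m : ℝ) : EReal) < f + i := by
  rw [coe_lt_coe_add_iff, coe_lt_coe_add_iff, sub_sub_eq_add_sub]

lemma add_coe_sub_coe (i : EReal) (f m : ℝ) : i + f - m = ((f - m : ℝ) : EReal) + i := by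
  rw [EReal.coe_sub, sub_eq_add_neg, sub_eq_add_neg, add_assoc, add_comm]

lemma exists_lt_coe_add_lt_iInf {X : Type*} {f : X → ℝ} {i : X → EReal} {C : Set X} {b m : ℝ}
    (hb : (b : EReal) < ⨅ x ∈ C, (((f x - m : ℝ) : EReal) + i x)) :
    ∃ q : ℝ, b < q ∧ ((q + m : ℝ) : EReal) < ⨅ x ∈ C, ((f x : EReal) + i x) := by
  obtain ⟨t, hbt, htC⟩ := EReal.lt_iff_exists_real_btwn.1 hb
  obtain ⟨q, hbq, hqt⟩ := exists_between (EReal.coe_lt_coe_iff.1 hbt)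
  refine ⟨q, hbq, (EReal.coe_lt_coe_iff.2 (add_lt_add_left hqt m)).trans_le ?_⟩
  exact le_iInf₂ fun x hx => (coe_lt_coe_sub_add_iff.1 (htC.trans_le (iInf₂_le x hx))).le

lemma lowerSemicontinuous_coe_add {X : Type*} [TopologicalSpace X] {I : X → EReal} {F₀ : X → ℝ}
    (hF₀ : Continuous F₀) (hI : LowerSemicontinuous I) :
    LowerSemicontinuous fun x => (F₀ x : EReal) + I x :=
  (continuous_coe_real_ereal.comp hF₀).lowerSemicontinuous.add' hI fun _ =>
    EReal.continuousAt_add (.inl (EReal.coe_ne_top _)) (.inl (EReal.coe_ne_bot _))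

end EReal

section LDP

variable {X : Type*} [TopologicalSpace X] [MeasurableSpace X] {μ : ℝ → Measure X} {I : X → EReal}

lemma hasLDP_iff_eventually : HasLDP μ I ↔
    (∀ x, 0 ≤ I x) ∧ LowerSemicontinuous I ∧ (∀ c : ℝ, IsCompact {x | I x ≤ c}) ∧
    (∀ F, IsClosed F → ∀ b : ℝ, b < ⨅ x ∈ F, I x →
      ∀ᶠ ε in 𝓝[>] (0 : ℝ), μ ε F ≤ expScale (-b) ε) ∧
    (∀ G, IsOpen G → ∀ x ∈ G, ∀ b : ℝ, I x < b →
      ∀ᶠ ε in 𝓝[>] (0 : ℝ), expScale (-b) ε ≤ μ ε G) := by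
  refine and_congr_right' (and_congr_right' (and_congr_right' (and_congr ?_ ?_)))
  · refine forall₂_congr fun F _ => limsup_sq_mul_log_le_iff.trans ?_
    rw [neg_surjective.forall]
    simp only [EReal.coe_neg, EReal.neg_lt_neg_iff]
  · refine forall₂_congr fun G _ => le_liminf_sq_mul_log_iff.trans ?_
    rw [neg_surjective.forall]
    simp only [EReal.coe_neg, EReal.neg_lt_neg_iff, iInf_lt_iff]
    exact ⟨fun h x hx b hb => h b ⟨x, hx, hb⟩, fun h b ⟨x, hx, hb⟩ => h x hx b hb⟩

lemma HasLDP.eventually_measure_le (hI : HasLDP μ I) {F : Set X} (hF : IsClosed F) {b : ℝ}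
    (hb : b < ⨅ x ∈ F, I x) : ∀ᶠ ε in 𝓝[>] (0 : ℝ), μ ε F ≤ expScale (-b) ε :=
  (hasLDP_iff_eventually.1 hI).2.2.2.1 F hF b hb

lemma HasLDP.eventually_le_measure (hI : HasLDP μ I) {G : Set X} (hG : IsOpen G) {x : X}
    (hx : x ∈ G) {b : ℝ} (hb : I x < b) : ∀ᶠ ε in 𝓝[>] (0 : ℝ), expScale (-b) ε ≤ μ ε G :=
  (hasLDP_iff_eventually.1 hI).2.2.2.2 G hG x hx b hb

lemma HasLDP.exists_ne_top (hI : HasLDP μ I)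
    (hμ : ∀ᶠ ε in 𝓝[>] (0 : ℝ), IsProbabilityMeasure (μ ε)) : ∃ x, I x ≠ ⊤ := by
  by_contra! htop
  have hsmall : ∀ᶠ ε in 𝓝[>] (0 : ℝ), μ ε univ ≤ expScale (-1) ε :=
    hI.eventually_measure_le isClosed_univ (by simpa only [htop, iInf_top] using EReal.coe_lt_top 1)
  obtain ⟨ε, hε, hprob, hle⟩ := (eventually_zero_lt_nhdsGT.and (hμ.and hsmall)).exists
  rw [measure_univ, ← expScale_zero ε] at hle
  linarith [le_of_expScale_le_expScale hε hle]

end LDP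

section AdmissibleTilt

variable {X : Type*} [MeasurableSpace X] {μ : ℝ → Measure X} {F : ℝ → X → ℝ} {F₀ : X → ℝ}

/-- The functions `F ε` are admissible exponents for tilting `μ ε`, with limit `F₀`: they are
exponentially equivalent to `F₀`, and the densities `exp (-F ε / ε²)` satisfy the uniform tail
condition of Varadhan's lemma. "Superexponentially small" is encoded as an eventual bound by
`expScale c ε` for every real `c`. -/
structure IsAdmissibleTilt (μ : ℝ → Measure X) (F : ℝ → X → ℝ) (F₀ : X → ℝ) : Prop where
  measurable : ∀ᶠ ε in 𝓝[>] (0 : ℝ), Measurable (F ε)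
  measure_far_le : ∀ δ : ℝ, 0 < δ → ∀ c : ℝ, ∀ᶠ ε in 𝓝[>] (0 : ℝ),
    μ ε {y | δ < |F ε y - F₀ y|} ≤ expScale c ε
  tail : ∀ c : ℝ, ∃ L : ℝ, ∀ᶠ ε in 𝓝[>] (0 : ℝ),
    ∫⁻ y in {y | F ε y < -L}, expScale (-F ε y) ε ∂(μ ε) ≤ expScale c ε

lemma setLIntegral_le_mul_measure {ν : Measure X} {f : X → ENNReal} {A : Set X} {c : ENNReal}
    (h : ∀ y ∈ A, f y ≤ c) : ∫⁻ y in A, f y ∂ν ≤ c * ν A :=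
  (setLIntegral_mono measurable_const h).trans_eq (setLIntegral_const A c)

lemma mul_measure_le_setLIntegral {ν : Measure X} {f : X → ENNReal} (hf : Measurable f) {A : Set X}
    {c : ENNReal} (h : ∀ y ∈ A, c ≤ f y) : c * ν A ≤ ∫⁻ y in A, f y ∂ν :=
  (setLIntegral_const A c).symm.trans_le (setLIntegral_mono hf h)

lemma eventually_setLIntegral_le_of_subset_union {f : ℝ → X → ENNReal} {A B C : ℝ → Set X}
    {c c' : ℝ} (hA : ∀ᶠ ε in 𝓝[>] (0 : ℝ), ∫⁻ y in A ε, f ε y ∂(μ ε) ≤ expScale c ε)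
    (hB : ∀ᶠ ε in 𝓝[>] (0 : ℝ), ∫⁻ y in B ε, f ε y ∂(μ ε) ≤ expScale c ε) (hc : c < c')
    (hC : ∀ ε, C ε ⊆ A ε ∪ B ε) :
    ∀ᶠ ε in 𝓝[>] (0 : ℝ), ∫⁻ y in C ε, f ε y ∂(μ ε) ≤ expScale c' ε := by
  filter_upwards [eventually_add_le_expScale hA hB hc] with ε hsum
  exact (lintegral_mono_set (hC ε)).trans ((lintegral_union_le _ _ _).trans hsum)

namespace IsAdmissibleTilt

-- On `{F ε ≥ -L}` the density is at most `exp (L / ε²)`, which `b` is chosen to beat.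
lemma exists_forall_eventually_setLIntegral_le (hF : IsAdmissibleTilt μ F F₀) (c : ℝ) :
    ∃ b : ℝ, ∀ A : ℝ → Set X, (∀ᶠ ε in 𝓝[>] (0 : ℝ), μ ε (A ε) ≤ expScale b ε) →
      ∀ᶠ ε in 𝓝[>] (0 : ℝ), ∫⁻ y in A ε, expScale (-F ε y) ε ∂(μ ε) ≤ expScale c ε := by
  obtain ⟨L, hL⟩ := hF.tail (c - 1)
  refine ⟨c - 1 - L, fun A hA => ?_⟩
  have hbulk : ∀ᶠ ε in 𝓝[>] (0 : ℝ),
      ∫⁻ y in A ε ∩ {y | -L ≤ F ε y}, expScale (-F ε y) ε ∂(μ ε) ≤ expScale (c - 1) ε := by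
    filter_upwards [hA] with ε hA
    calc ∫⁻ y in A ε ∩ {y | -L ≤ F ε y}, expScale (-F ε y) ε ∂(μ ε)
        ≤ expScale L ε * μ ε (A ε ∩ {y | -L ≤ F ε y}) :=
          setLIntegral_le_mul_measure fun y hy => expScale_mono ε (neg_le.1 hy.2)
      _ ≤ expScale L ε * expScale (c - 1 - L) ε := by
          gcongr
          exact (measure_mono inter_subset_left).trans hA
      _ = expScale (c - 1) ε := by rw [← expScale_add, add_sub_cancel]
  refine eventually_setLIntegral_le_of_subset_union hL hbulk (sub_one_lt c) fun ε y hy => ?_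
  exact (lt_or_ge (F ε y) (-L)).imp id fun h => ⟨hy, h⟩

lemma eventually_setLIntegral_far_le (hF : IsAdmissibleTilt μ F F₀) {δ : ℝ} (hδ : 0 < δ) (c : ℝ) :
    ∀ᶠ ε in 𝓝[>] (0 : ℝ),
      ∫⁻ y in {y | δ < |F ε y - F₀ y|}, expScale (-F ε y) ε ∂(μ ε) ≤ expScale c ε := by
  obtain ⟨b, hb⟩ := hF.exists_forall_eventually_setLIntegral_le c
  exact hb _ (hF.measure_far_le δ hδ b)

lemma eventually_setLIntegral_le_of_near (hF : IsAdmissibleTilt μ F F₀) {δ : ℝ} (hδ : 0 < δ)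
    {A : Set X} {c c' : ℝ} (hc : c < c')
    (hA : ∀ᶠ ε in 𝓝[>] (0 : ℝ),
      ∫⁻ y in A ∩ {y | |F ε y - F₀ y| ≤ δ}, expScale (-F ε y) ε ∂(μ ε) ≤ expScale c ε) :
    ∀ᶠ ε in 𝓝[>] (0 : ℝ), ∫⁻ y in A, expScale (-F ε y) ε ∂(μ ε) ≤ expScale c' ε := by
  refine eventually_setLIntegral_le_of_subset_union hA (hF.eventually_setLIntegral_far_le hδ c) hc
    fun ε y hy => ?_
  exact (le_or_gt |F ε y - F₀ y| δ).imp (fun h => ⟨hy, h⟩) id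

lemma eventually_le_measure_near (hF : IsAdmissibleTilt μ F F₀) {δ : ℝ} (hδ : 0 < δ)
    {A : Set X} {c c' : ℝ} (hc : c < c')
    (hA : ∀ᶠ ε in 𝓝[>] (0 : ℝ), expScale c' ε ≤ μ ε A) :
    ∀ᶠ ε in 𝓝[>] (0 : ℝ), expScale c ε ≤ μ ε (A \ {y | δ < |F ε y - F₀ y|}) := by
  filter_upwards [hA, hF.measure_far_le δ hδ c, eventually_two_mul_expScale_le hc]
    with ε hA hfar htwo
  calc expScale c ε ≤ expScale c' ε - expScale c ε :=
        ENNReal.le_sub_of_add_le_right (expScale_ne_top c ε) ((two_mul _).symm.trans_le htwo)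
    _ ≤ μ ε A - μ ε {y | δ < |F ε y - F₀ y|} := tsub_le_tsub hA hfar
    _ ≤ μ ε (A \ {y | δ < |F ε y - F₀ y|}) := le_measure_sdiff

end IsAdmissibleTilt

end AdmissibleTilt

section Laplace

variable {X : Type*} [TopologicalSpace X] [MeasurableSpace X] {μ : ℝ → Measure X} {I : X → EReal}
  {F : ℝ → X → ℝ} {F₀ : X → ℝ}

namespace HasLDP

lemma eventually_le_setLIntegral_tilt (hI : HasLDP μ I) (hF : IsAdmissibleTilt μ F F₀)
    (hF₀ : Continuous F₀) {G : Set X} (hG : IsOpen G) {x : X} (hx : x ∈ G) {t : ℝ}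
    (ht : (F₀ x : EReal) + I x < t) :
    ∀ᶠ ε in 𝓝[>] (0 : ℝ), expScale (-t) ε ≤ ∫⁻ y in G, expScale (-F ε y) ε ∂(μ ε) := by
  obtain ⟨b, hIb, hbt⟩ := EReal.lt_iff_exists_real_btwn.1 (coe_add_lt_coe_iff.1 ht)
  obtain ⟨δ, hδ, hδt⟩ : ∃ δ : ℝ, 0 < δ ∧ F₀ x + b + 3 * δ = t :=
    ⟨(t - F₀ x - b) / 3, by linarith [EReal.coe_lt_coe_iff.1 hbt], by ring⟩
  set U : Set X := G ∩ {y | F₀ y < F₀ x + δ}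
  have hU : IsOpen U := hG.inter (isOpen_lt hF₀ continuous_const)
  have hxU : x ∈ U := ⟨hx, lt_add_of_pos_right _ hδ⟩
  filter_upwards [hF.measurable, hF.eventually_le_measure_near hδ
    (show -b - δ < -b by linarith) (hI.eventually_le_measure hU hxU hIb)] with ε hmeas hmass
  calc expScale (-t) ε = expScale (-(F₀ x + 2 * δ)) ε * expScale (-b - δ) ε := by
        rw [← expScale_add, ← hδt]
        ring_nf
    _ ≤ expScale (-(F₀ x + 2 * δ)) ε * μ ε (U \ {y | δ < |F ε y - F₀ y|}) := by gcongr
    _ ≤ ∫⁻ y in U \ {y | δ < |F ε y - F₀ y|}, expScale (-F ε y) ε ∂(μ ε) := by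
        refine mul_measure_le_setLIntegral (measurable_expScale_comp hmeas.fun_neg ε) ?_
        rintro y ⟨⟨_, hy : F₀ y < F₀ x + δ⟩, hfar⟩
        have hnear : |F ε y - F₀ y| ≤ δ := not_lt.1 hfar
        exact expScale_mono ε (by linarith [(abs_le.1 hnear).2])
    _ ≤ ∫⁻ y in G, expScale (-F ε y) ε ∂(μ ε) := lintegral_mono_set fun y hy => hy.1.1

lemma exists_mem_nhds_eventually_setLIntegral_tilt_le [RegularSpace X] (hI : HasLDP μ I)
    (hF : IsAdmissibleTilt μ F F₀) (hF₀ : Continuous F₀) {x : X} {s : ℝ}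
    (hs : (s : EReal) < F₀ x + I x) :
    ∃ A ∈ 𝓝 x, ∀ᶠ ε in 𝓝[>] (0 : ℝ),
      ∫⁻ y in A, expScale (-F ε y) ε ∂(μ ε) ≤ expScale (-s) ε := by
  obtain ⟨b, hsb, hbI⟩ := EReal.lt_iff_exists_real_btwn.1 (coe_lt_coe_add_iff.1 hs)
  obtain ⟨δ, hδ, hδs⟩ : ∃ δ : ℝ, 0 < δ ∧ s + 4 * δ = F₀ x + b :=
    ⟨(F₀ x + b - s) / 4, by linarith [EReal.coe_lt_coe_iff.1 hsb], by ring⟩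
  have hnhds : {y | (b : EReal) < I y} ∩ {y | F₀ x - δ < F₀ y} ∈ 𝓝 x :=
    inter_mem (hI.2.1 x b hbI) (hF₀.continuousAt.eventually (lt_mem_nhds (by linarith)))
  obtain ⟨A, hAx, hAc, hA⟩ := exists_mem_nhds_isClosed_subset hnhds
  have hinf : ((b - δ : ℝ) : EReal) < ⨅ y ∈ A, I y :=
    (EReal.coe_lt_coe_iff.2 (sub_lt_self b hδ)).trans_le (le_iInf₂ fun y hy => (hA hy).1.le)
  refine ⟨A, hAx, hF.eventually_setLIntegral_le_of_near hδ (show -s - δ < -s by linarith) ?_⟩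
  filter_upwards [hI.eventually_measure_le hAc hinf] with ε hmass
  calc ∫⁻ y in A ∩ {y | |F ε y - F₀ y| ≤ δ}, expScale (-F ε y) ε ∂(μ ε)
      ≤ expScale (-(F₀ x - 2 * δ)) ε * μ ε (A ∩ {y | |F ε y - F₀ y| ≤ δ}) := by
        refine setLIntegral_le_mul_measure ?_
        rintro y ⟨hy, hnear : |F ε y - F₀ y| ≤ δ⟩
        have hy₀ : F₀ x - δ < F₀ y := (hA hy).2
        exact expScale_mono ε (by linarith [(abs_le.1 hnear).1])
    _ ≤ expScale (-(F₀ x - 2 * δ)) ε * expScale (-(b - δ)) ε := by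
        gcongr
        exact (measure_mono inter_subset_left).trans hmass
    _ = expScale (-s - δ) ε := by
        rw [← expScale_add]
        congr 1
        linarith

lemma exists_isOpen_superset_eventually_setLIntegral_tilt_le [RegularSpace X] (hI : HasLDP μ I)
    (hF : IsAdmissibleTilt μ F F₀) (hF₀ : Continuous F₀) {K : Set X} (hK : IsCompact K) {s : ℝ}
    (hs : ∀ x ∈ K, (s : EReal) < F₀ x + I x) :
    ∃ U, IsOpen U ∧ K ⊆ U ∧ ∀ r < s, ∀ᶠ ε in 𝓝[>] (0 : ℝ),
      ∫⁻ y in U, expScale (-F ε y) ε ∂(μ ε) ≤ expScale (-r) ε := by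
  refine hK.induction_on (p := fun A => ∃ U, IsOpen U ∧ A ⊆ U ∧ ∀ r < s, ∀ᶠ ε in 𝓝[>] (0 : ℝ),
    ∫⁻ y in U, expScale (-F ε y) ε ∂(μ ε) ≤ expScale (-r) ε) ?empty ?mono ?union ?nhds
  case empty => exact ⟨∅, isOpen_empty, subset_rfl, fun r _ => by simp⟩
  case mono => exact fun A A' hAA' ⟨U, hU, hAU, hle⟩ => ⟨U, hU, hAA'.trans hAU, hle⟩
  case union =>
    rintro A A' ⟨U, hU, hAU, hle⟩ ⟨U', hU', hAU', hle'⟩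
    refine ⟨U ∪ U', hU.union hU', union_subset_union hAU hAU', fun r hr => ?_⟩
    obtain ⟨q, hrq, hqs⟩ := exists_between hr
    exact eventually_setLIntegral_le_of_subset_union (hle q hqs) (hle' q hqs) (neg_lt_neg hrq)
      fun _ => subset_rfl
  case nhds =>
    intro x hx
    obtain ⟨A, hAx, hle⟩ := hI.exists_mem_nhds_eventually_setLIntegral_tilt_le hF hF₀ (hs x hx)
    refine ⟨interior A, mem_nhdsWithin_of_mem_nhds (interior_mem_nhds.2 hAx), interior A,
      isOpen_interior, subset_rfl, fun r hr => ?_⟩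
    filter_upwards [hle] with ε hle
    exact (lintegral_mono_set interior_subset).trans
      (hle.trans (expScale_mono ε (neg_le_neg hr.le)))

lemma eventually_setLIntegral_tilt_le [RegularSpace X] (hI : HasLDP μ I)
    (hF : IsAdmissibleTilt μ F F₀) (hF₀ : Continuous F₀) {C : Set X} (hC : IsClosed C) {s : ℝ}
    (hs : (s : EReal) < ⨅ x ∈ C, ((F₀ x : EReal) + I x)) :
    ∀ᶠ ε in 𝓝[>] (0 : ℝ), ∫⁻ y in C, expScale (-F ε y) ε ∂(μ ε) ≤ expScale (-s) ε := by
  obtain ⟨t, hst, htC⟩ := EReal.lt_iff_exists_real_btwn.1 hs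
  obtain ⟨r, hsr, hrt⟩ := exists_between (EReal.coe_lt_coe_iff.1 hst)
  obtain ⟨b, hb⟩ := hF.exists_forall_eventually_setLIntegral_le (-r)
  have hK : IsCompact (C ∩ {x | I x ≤ (1 - b : ℝ)}) := (hI.2.2.1 _).inter_left hC
  obtain ⟨U, hU, hKU, hle⟩ := hI.exists_isOpen_superset_eventually_setLIntegral_tilt_le hF hF₀ hK
    fun x hx => htC.trans_le (iInf₂_le x hx.1)
  have hout : ((-b : ℝ) : EReal) < ⨅ x ∈ C \ U, I x :=
    (EReal.coe_lt_coe_iff.2 (by linarith : -b < 1 - b)).trans_le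
      (le_iInf₂ fun x hx => le_of_not_ge fun h => hx.2 (hKU ⟨hx.1, h⟩))
  have hmass : ∀ᶠ ε in 𝓝[>] (0 : ℝ), μ ε (C \ U) ≤ expScale b ε := by
    simpa only [neg_neg] using hI.eventually_measure_le (hC.sdiff hU) hout
  refine eventually_setLIntegral_le_of_subset_union (hle r hrt) (hb _ hmass) (neg_lt_neg hsr)
    fun _ => ?_
  rw [union_sdiff_self]
  exact subset_union_right

lemma eventually_lintegral_tilt_le [RegularSpace X] (hI : HasLDP μ I)
    (hF : IsAdmissibleTilt μ F F₀) (hF₀ : Continuous F₀) {m : ℝ}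
    (hm : ⨅ z, ((F₀ z : EReal) + I z) = m) {s : ℝ} (hs : s < m) :
    ∀ᶠ ε in 𝓝[>] (0 : ℝ), ∫⁻ y, expScale (-F ε y) ε ∂(μ ε) ≤ expScale (-s) ε := by
  have huniv : (s : EReal) < ⨅ x ∈ univ, ((F₀ x : EReal) + I x) := by
    rw [iInf_univ, hm]
    exact EReal.coe_lt_coe_iff.2 hs
  simpa only [setLIntegral_univ] using hI.eventually_setLIntegral_tilt_le hF hF₀ isClosed_univ huniv

lemma eventually_le_lintegral_tilt (hI : HasLDP μ I) (hF : IsAdmissibleTilt μ F F₀)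
    (hF₀ : Continuous F₀) {m : ℝ} (hm : ⨅ z, ((F₀ z : EReal) + I z) = m) {t : ℝ} (ht : m < t) :
    ∀ᶠ ε in 𝓝[>] (0 : ℝ), expScale (-t) ε ≤ ∫⁻ y, expScale (-F ε y) ε ∂(μ ε) := by
  obtain ⟨x, hx⟩ := iInf_lt_iff.1 (hm.trans_lt (EReal.coe_lt_coe_iff.2 ht))
  simpa only [setLIntegral_univ] using
    hI.eventually_le_setLIntegral_tilt hF hF₀ isOpen_univ (mem_univ x) hx

-- Otherwise the mass that the tilt puts near `x` would exceed what the tail condition allows.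
lemma exists_forall_neg_le_of_coe_add_lt (hI : HasLDP μ I) (hF : IsAdmissibleTilt μ F F₀)
    (hF₀ : Continuous F₀) (c : ℝ) : ∃ L : ℝ, ∀ x, (F₀ x : EReal) + I x < c → -L ≤ F₀ x := by
  obtain ⟨L, hL⟩ := hF.tail (-c - 2)
  refine ⟨L + 1, fun x hx => not_lt.1 fun hlt => ?_⟩
  have hlower := hI.eventually_le_setLIntegral_tilt hF hF₀
    (isOpen_lt hF₀ continuous_const : IsOpen {y | F₀ y < -(L + 1)}) hlt hx
  have hupper := hF.eventually_setLIntegral_le_of_near (A := {y | F₀ y < -(L + 1)}) one_pos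
    (show -c - 2 < -c - 1 by linarith) <| hL.mono fun ε hL => (lintegral_mono_set ?_).trans hL
  · obtain ⟨ε, hε, hl, hu⟩ := (eventually_zero_lt_nhdsGT.and (hlower.and hupper)).exists
    linarith [le_of_expScale_le_expScale hε (hl.trans hu)]
  · rintro y ⟨hy : F₀ y < -(L + 1), hnear : |F ε y - F₀ y| ≤ 1⟩
    exact (by linarith [(abs_le.1 hnear).2] : F ε y < -L)

lemma isCompact_setOf_coe_add_le (hI : HasLDP μ I) (hF : IsAdmissibleTilt μ F F₀)
    (hF₀ : Continuous F₀) (c : ℝ) : IsCompact {x | (F₀ x : EReal) + I x ≤ c} := by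
  obtain ⟨L, hL⟩ := hI.exists_forall_neg_le_of_coe_add_lt hF hF₀ (c + 1)
  refine (hI.2.2.1 (c + 1 + L)).of_isClosed_subset
    ((lowerSemicontinuous_coe_add hF₀ hI.2.1).isClosed_preimage c) fun x hx => ?_
  have hlt : (F₀ x : EReal) + I x < (c + 1 : ℝ) :=
    lt_of_le_of_lt hx (EReal.coe_lt_coe_iff.2 (lt_add_one c))
  exact (coe_add_lt_coe_iff.1 hlt).le.trans (EReal.coe_le_coe_iff.2 (by linarith [hL x hlt]))

lemma exists_iInf_coe_add_eq_coe (hI : HasLDP μ I) (hF : IsAdmissibleTilt μ F F₀)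
    (hF₀ : Continuous F₀) (hfin : ∃ x, I x ≠ ⊤) :
    ∃ m : ℝ, ⨅ z, ((F₀ z : EReal) + I z) = m := by
  obtain ⟨x, hx⟩ := hfin
  obtain ⟨L, hL⟩ := hI.exists_forall_neg_le_of_coe_add_lt hF hF₀ 0
  have hlower : ((min 0 (-L) : ℝ) : EReal) ≤ ⨅ z, ((F₀ z : EReal) + I z) := by
    refine le_iInf fun z => ?_
    rcases lt_or_ge ((F₀ z : EReal) + I z) (0 : ℝ) with hz | hz
    · calc ((min 0 (-L) : ℝ) : EReal) ≤ F₀ z :=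
            EReal.coe_le_coe_iff.2 ((min_le_right _ _).trans (hL z hz))
        _ ≤ F₀ z + I z := le_add_of_nonneg_right (hI.1 z)
    · exact (EReal.coe_le_coe_iff.2 (min_le_left _ _)).trans hz
  have hupper : ⨅ z, ((F₀ z : EReal) + I z) < ⊤ :=
    (iInf_le _ x).trans_lt (EReal.add_lt_top (EReal.coe_ne_top _) hx)
  exact ⟨_, (EReal.coe_toReal hupper.ne (ne_bot_of_le_ne_bot (EReal.coe_ne_bot _) hlower)).symm⟩

theorem tilt [RegularSpace X] [OpensMeasurableSpace X] (hI : HasLDP μ I) (hfin : ∃ x, I x ≠ ⊤)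
    (hF : IsAdmissibleTilt μ F F₀) (hF₀ : Continuous F₀) {ν : ℝ → Measure X}
    (hν : ∀ᶠ ε in 𝓝[>] (0 : ℝ), ∀ A, MeasurableSet A →
      ν ε A = (∫⁻ y in A, expScale (-F ε y) ε ∂(μ ε)) / ∫⁻ y, expScale (-F ε y) ε ∂(μ ε)) :
    HasLDP ν (fun y => I y + F₀ y - ⨅ z, ((F₀ z : EReal) + I z)) := by
  obtain ⟨m, hm⟩ := hI.exists_iInf_coe_add_eq_coe hF hF₀ hfin
  simp only [hm, add_coe_sub_coe]
  refine hasLDP_iff_eventually.2 ⟨fun y => ?nonneg,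
    lowerSemicontinuous_coe_add (hF₀.sub continuous_const) hI.2.1, fun c => ?compact,
    fun C hC b hb => ?upper, fun G hG x hx b hb => ?lower⟩
  case nonneg =>
    rw [← EReal.coe_zero, ← not_lt, coe_sub_add_lt_coe_iff, zero_add, ← hm, not_lt]
    exact iInf_le _ y
  case compact =>
    simpa only [← not_lt, coe_lt_coe_sub_add_iff] using hI.isCompact_setOf_coe_add_le hF hF₀ (c + m)
  case upper =>
    obtain ⟨q, hbq, hqC⟩ := exists_lt_coe_add_lt_iInf hb
    filter_upwards [hν, hI.eventually_setLIntegral_tilt_le hF hF₀ hC hqC,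
      hI.eventually_le_lintegral_tilt hF hF₀ hm (show m < q + m - b by linarith)]
      with ε hν hnum hden
    calc ν ε C ≤ expScale (-(q + m)) ε / expScale (-(q + m - b)) ε :=
          (hν C hC.measurableSet).trans_le (ENNReal.div_le_div hnum hden)
      _ = expScale (-b) ε := by rw [expScale_div]; ring_nf
  case lower =>
    obtain ⟨q, hxq, hqb⟩ := EReal.lt_iff_exists_real_btwn.1 hb
    filter_upwards [hν, hI.eventually_le_setLIntegral_tilt hF hF₀ hG hx
        (coe_sub_add_lt_coe_iff.1 hxq),
      hI.eventually_lintegral_tilt_le hF hF₀ hm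
        (show q + m - b < m by linarith [EReal.coe_lt_coe_iff.1 hqb])] with ε hν hnum hden
    calc expScale (-b) ε = expScale (-(q + m)) ε / expScale (-(q + m - b)) ε := by
          rw [expScale_div]; ring_nf
      _ ≤ ν ε G := (ENNReal.div_le_div hnum hden).trans_eq (hν G hG.measurableSet).symm

end HasLDP

end Laplace

section ExpMoments

variable {X : Type*} [MeasurableSpace X] {μ : ℝ → Measure X}

/-- The functions `S ε` have finite exponential moments of all positive orders under `μ ε` at speed
`ε²`: each `∫ exp (γ S ε / ε²) dμ ε` is eventually at most `exp (C / ε²)` for some real `C`. -/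
structure HasExpMoments (μ : ℝ → Measure X) (S : ℝ → X → ℝ) : Prop where
  measurable : ∀ᶠ ε in 𝓝[>] (0 : ℝ), Measurable (S ε)
  moment : ∀ γ : ℝ, 0 < γ → ∃ C : ℝ, ∀ᶠ ε in 𝓝[>] (0 : ℝ),
    ∫⁻ y, expScale (γ * S ε y) ε ∂(μ ε) ≤ expScale C ε

namespace HasExpMoments

variable {S T : ℝ → X → ℝ}

lemma of_limsup_lt_top (hmeas : ∀ᶠ ε in 𝓝[>] (0 : ℝ), Measurable (S ε))
    (h : ∀ γ : ℝ, 0 < γ → limsup (fun ε : ℝ => ((ε ^ 2 : ℝ) : EReal) *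
      ENNReal.log (∫⁻ y, expScale (γ * S ε y) ε ∂(μ ε))) (𝓝[>] (0 : ℝ)) < ⊤) :
    HasExpMoments μ S := by
  refine ⟨hmeas, fun γ hγ => ?_⟩
  obtain ⟨C, hC, _⟩ := EReal.lt_iff_exists_real_btwn.1 (h γ hγ)
  exact ⟨C, limsup_sq_mul_log_le_iff.1 le_rfl C hC⟩

lemma add (hS : HasExpMoments μ S) (hT : HasExpMoments μ T) : HasExpMoments μ (S + T) := by
  refine ⟨hS.measurable.mp (hT.measurable.mono fun _ hT hS => hS.add hT), fun γ hγ => ?_⟩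
  obtain ⟨C, hC⟩ := hS.moment (γ * 2) (by positivity)
  obtain ⟨D, hD⟩ := hT.moment (γ * 2) (by positivity)
  refine ⟨max C D + 1, ?_⟩
  filter_upwards [hS.measurable, eventually_add_le_expScale
    (hC.mono fun ε h => h.trans (expScale_mono ε (le_max_left C D)))
    (hD.mono fun ε h => h.trans (expScale_mono ε (le_max_right C D))) (lt_add_one _)]
    with ε hmeas hsum
  have hmeas' : Measurable fun y => expScale (γ * 2 * S ε y) ε :=
    measurable_expScale_comp (hmeas.const_mul _) ε
  calc ∫⁻ y, expScale (γ * (S ε y + T ε y)) ε ∂(μ ε)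
      ≤ ∫⁻ y, (expScale (γ * 2 * S ε y) ε + expScale (γ * 2 * T ε y) ε) ∂(μ ε) := by
        refine lintegral_mono fun y => ?_
        rcases le_total (S ε y) (T ε y) with h | h
        · exact le_add_of_nonneg_of_le zero_le (expScale_mono ε (by nlinarith))
        · exact le_add_of_le_of_nonneg (expScale_mono ε (by nlinarith)) zero_le
    _ ≤ expScale (max C D + 1) ε := (lintegral_add_left hmeas' _).trans_le hsum

lemma sum {ι : Type*} {s : Finset ι} (hs : s.Nonempty) {S : ι → ℝ → X → ℝ}
    (hS : ∀ i ∈ s, HasExpMoments μ (S i)) : HasExpMoments μ (∑ i ∈ s, S i) :=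
  Finset.sum_induction_nonempty S (HasExpMoments μ) (fun _ _ => add) hs hS

-- Chernoff: on `{L < S}` one has `γ S ≤ (γ + 1) S - L`.
lemma exists_eventually_setLIntegral_tail_le (hS : HasExpMoments μ S) {γ : ℝ} (hγ : 0 < γ)
    (c : ℝ) : ∃ L : ℝ, ∀ᶠ ε in 𝓝[>] (0 : ℝ),
      ∫⁻ y in {y | L < S ε y}, expScale (γ * S ε y) ε ∂(μ ε) ≤ expScale c ε := by
  obtain ⟨C, hC⟩ := hS.moment (γ + 1) (by positivity)
  refine ⟨C - c, ?_⟩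
  filter_upwards [hS.measurable, hC] with ε hmeas hC
  have hmeas' : Measurable fun y => expScale ((γ + 1) * S ε y) ε :=
    measurable_expScale_comp (hmeas.const_mul _) ε
  calc ∫⁻ y in {y | C - c < S ε y}, expScale (γ * S ε y) ε ∂(μ ε)
      ≤ ∫⁻ y in {y | C - c < S ε y}, expScale (c - C) ε * expScale ((γ + 1) * S ε y) ε ∂(μ ε) := by
        refine setLIntegral_mono (hmeas'.const_mul _) fun y (hy : C - c < S ε y) => ?_
        rw [← expScale_add]
        exact expScale_mono ε (by linarith)
    _ ≤ expScale (c - C) ε * ∫⁻ y, expScale ((γ + 1) * S ε y) ε ∂(μ ε) :=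
        (setLIntegral_le_lintegral _ _).trans_eq (lintegral_const_mul _ hmeas')
    _ ≤ expScale (c - C) ε * expScale C ε := by gcongr
    _ = expScale c ε := by rw [← expScale_add, sub_add_cancel]

end HasExpMoments

lemma IsAdmissibleTilt.of_dominated {F S : ℝ → X → ℝ} {F₀ : X → ℝ}
    (hmeas : ∀ᶠ ε in 𝓝[>] (0 : ℝ), Measurable (F ε)) (hS : HasExpMoments μ S)
    (hF₀ : ∀ᶠ ε in 𝓝[>] (0 : ℝ), ∀ y, -F₀ y ≤ S ε y)
    (hF : ∀ᶠ ε in 𝓝[>] (0 : ℝ), ∀ y, |F ε y - F₀ y| ≤ ε * S ε y) : IsAdmissibleTilt μ F F₀ := by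
  have hlt {a : ℝ} (L : ℝ) (ha : 0 < a) : ∀ᶠ ε in 𝓝[>] (0 : ℝ), ε * L < a :=
    nhdsWithin_le_nhds <|
      ((continuous_mul_const L).tendsto' 0 0 (zero_mul L)).eventually_lt_const ha
  have hS_nonneg : ∀ᶠ ε in 𝓝[>] (0 : ℝ), ∀ y, 0 ≤ S ε y := by
    filter_upwards [eventually_zero_lt_nhdsGT, hF] with ε hε hF y
    exact nonneg_of_mul_nonneg_right ((abs_nonneg _).trans (hF y)) hε
  refine ⟨hmeas, fun δ hδ c => ?far, fun c => ?tail⟩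
  case far =>
    obtain ⟨L, hL⟩ := hS.exists_eventually_setLIntegral_tail_le one_pos c
    filter_upwards [eventually_zero_lt_nhdsGT, hS.measurable, hF, hS_nonneg, hlt L hδ, hL]
      with ε hε hmeas hF hS_nonneg hεL hL
    calc μ ε {y | δ < |F ε y - F₀ y|} ≤ μ ε {y | L < S ε y} :=
          measure_mono fun y (hy : δ < _) => lt_of_mul_lt_mul_left
            (hεL.trans (hy.trans_le (hF y))) hε.le
      _ = 1 * μ ε {y | L < S ε y} := (one_mul _).symm
      _ ≤ ∫⁻ y in {y | L < S ε y}, expScale (1 * S ε y) ε ∂(μ ε) := by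
          refine mul_measure_le_setLIntegral
            (measurable_expScale_comp (hmeas.const_mul 1) ε) fun y _ => ?_
          rw [← expScale_zero ε, one_mul]
          exact expScale_mono ε (hS_nonneg y)
      _ ≤ expScale c ε := hL
  case tail =>
    obtain ⟨L, hL⟩ := hS.exists_eventually_setLIntegral_tail_le two_pos c
    refine ⟨2 * L, ?_⟩
    filter_upwards [hF₀, hF, hS_nonneg, hlt 1 one_pos, hL] with ε hF₀ hF hS_nonneg hε1 hL
    have hbound (y : X) : -F ε y ≤ 2 * S ε y := by
      nlinarith [hF₀ y, (abs_le.1 (hF y)).1, hS_nonneg y]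
    calc ∫⁻ y in {y | F ε y < -(2 * L)}, expScale (-F ε y) ε ∂(μ ε)
        ≤ ∫⁻ y in {y | L < S ε y}, expScale (-F ε y) ε ∂(μ ε) :=
          lintegral_mono_set fun y (hy : F ε y < _) => (by linarith [hbound y] : L < S ε y)
      _ ≤ ∫⁻ y in {y | L < S ε y}, expScale (2 * S ε y) ε ∂(μ ε) :=
          lintegral_mono fun y => expScale_mono ε (hbound y)
      _ ≤ expScale c ε := hL

end ExpMoments

lemma abs_sum_pow_div_factorial_add_sub_le {ε : ℝ} (hε : 0 < ε) (hε1 : ε ≤ 1) {n : ℕ} (hn : 1 ≤ n)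
    (a : ℕ → ℝ) (r : ℝ) :
    |(∑ i ∈ Finset.range n, ε ^ i / (Nat.factorial i) * a i) + ε ^ n * r - a 0| ≤
      ε * ∑ i ∈ Finset.range n, max |a i| |r| := by
  obtain ⟨k, rfl⟩ := Nat.exists_eq_add_of_le' hn
  have hpow (j : ℕ) : ε ^ (j + 1) ≤ ε := pow_le_of_le_one hε.le hε1 j.succ_ne_zero
  have hterm (i : ℕ) : |ε ^ (i + 1) / (Nat.factorial (i + 1)) * a (i + 1)| ≤
      ε * max |a (i + 1)| |r| := by
    rw [abs_mul, abs_of_nonneg (by positivity)]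
    gcongr
    · exact (div_le_self (by positivity) (by exact_mod_cast (i + 1).factorial_pos)).trans (hpow i)
    · exact le_max_left _ _
  have hrem : |ε ^ (k + 1) * r| ≤ ε * max |a 0| |r| := by
    rw [abs_mul, abs_of_nonneg (by positivity)]
    gcongr
    · exact hpow k
    · exact le_max_right _ _
  calc |(∑ i ∈ Finset.range (k + 1), ε ^ i / (Nat.factorial i) * a i) + ε ^ (k + 1) * r - a 0|
      = |(∑ i ∈ Finset.range k, ε ^ (i + 1) / (Nat.factorial (i + 1)) * a (i + 1)) +
          ε ^ (k + 1) * r| := by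
        rw [Finset.sum_range_succ']
        simp only [pow_zero, Nat.factorial_zero, Nat.cast_one, div_one, one_mul]
        congr 1
        ring
    _ ≤ (∑ i ∈ Finset.range k, ε * max |a (i + 1)| |r|) + ε * max |a 0| |r| :=
        (abs_add_le _ _).trans (add_le_add
          ((Finset.abs_sum_le_sum_abs _ _).trans (Finset.sum_le_sum fun i _ => hterm i)) hrem)
    _ = ε * ∑ i ∈ Finset.range (k + 1), max |a i| |r| := by
        rw [Finset.sum_range_succ', mul_add, Finset.mul_sum]

theorem ldp_tilting_eps_dependent_general
    {X : Type*} [TopologicalSpace X] [RegularSpace X] [MeasurableSpace X] [OpensMeasurableSpace X]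
    (μ₀ : ℝ → Measure X) (hprob : ∀ ε, 0 < ε → IsProbabilityMeasure (μ₀ ε))
    (I₀ : X → EReal) (hLDP₀ : HasLDP μ₀ I₀)
    (n : ℕ) (hn : 1 ≤ n)
    (Fs : ℕ → X → ℝ) (R : ℝ → X → ℝ) (Fe : ℝ → X → ℝ)
    (hmeasFs : ∀ i, Measurable (Fs i)) (hmeasR : ∀ ε, Measurable (R ε))
    (hexp : ∀ ε : ℝ, 0 < ε → ∀ y : X,
      Fe ε y = (∑ i ∈ Finset.range n, ε ^ i / (Nat.factorial i) * Fs i y) + ε ^ n * R ε y)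
    (hF₀ : Continuous (Fs 0))
    (hmom : ∀ i < n, ∀ γ : ℝ, 0 < γ →
      limsup (fun ε : ℝ => ((ε ^ 2 : ℝ) : EReal) *
          ENNReal.log (∫⁻ y, ENNReal.ofReal
            (Real.exp (γ * max |Fs i y| |R ε y| / ε ^ 2)) ∂(μ₀ ε)))
        (𝓝[>] (0 : ℝ)) < (⊤ : EReal))
    (μ : ℝ → Measure X)
    (hμ : ∀ ε : ℝ, 0 < ε → ∀ A : Set X, MeasurableSet A →
      μ ε A = (∫⁻ y in A, ENNReal.ofReal (Real.exp (-Fe ε y / ε ^ 2)) ∂(μ₀ ε)) /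
        (∫⁻ y, ENNReal.ofReal (Real.exp (-Fe ε y / ε ^ 2)) ∂(μ₀ ε))) :
    HasLDP μ (fun y => I₀ y + (Fs 0 y : EReal) - ⨅ z : X, ((Fs 0 z : EReal) + I₀ z)) := by
  set S : ℝ → X → ℝ := ∑ i ∈ Finset.range n, fun ε y => max |Fs i y| |R ε y| with hS_def
  have hS_apply (ε : ℝ) (y : X) : S ε y = ∑ i ∈ Finset.range n, max |Fs i y| |R ε y| := by
    simp only [hS_def, Finset.sum_apply]
  have hS : HasExpMoments μ₀ S := .sum (Finset.nonempty_range_iff.2 (by lia)) fun i hi =>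
    .of_limsup_lt_top (.of_forall fun ε => (hmeasFs i).abs.max (hmeasR ε).abs)
      (hmom i (Finset.mem_range.1 hi))
  have hF : IsAdmissibleTilt μ₀ Fe (Fs 0) := by
    refine .of_dominated ?meas hS (.of_forall fun ε y => ?neg_le) ?dist
    case meas =>
      filter_upwards [eventually_zero_lt_nhdsGT] with ε hε
      rw [funext (hexp ε hε)]
      fun_prop
    case neg_le =>
      rw [hS_apply]
      exact (neg_le_abs _).trans <| (le_max_left _ |R ε y|).trans <|
        Finset.single_le_sum (f := fun i => max |Fs i y| |R ε y|) (fun i _ => by positivity)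
          (Finset.mem_range.2 hn)
    case dist =>
      filter_upwards [Ioc_mem_nhdsGT one_pos] with ε hε y
      rw [hexp ε hε.1, hS_apply]
      exact abs_sum_pow_div_factorial_add_sub_le hε.1 hε.2 hn (Fs · y) (R ε y)
  exact hLDP₀.tilt (hLDP₀.exists_ne_top (eventually_zero_lt_nhdsGT.mono hprob)) hF hF₀
    (eventually_zero_lt_nhdsGT.mono hμ)

/-- **ε-dependent tilting lemma.** Tilting an exponentially tight family `(μ₀ ε)` satisfying
an LDP with good rate `I₀` by the densities `exp (−Fε/ε²)` (normalized), where the tilt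
`Fε = F₀ + ε F₁ + ⋯ + ε^{n−1}/(n−1)! F_{n−1} + εⁿ Rₙ(ε,·)` may depend on `ε`, yields an LDP
with rate `I = I₀ + F₀ − inf (F₀ + I₀)`: only the leading term `F₀` survives. -/
theorem ldp_tilting_eps_dependent
    {B : Type*} [NormedAddCommGroup B] [NormedSpace ℝ B] [CompleteSpace B]
    [MeasurableSpace B] [BorelSpace B]
    (μ₀ : ℝ → Measure B) (hprob : ∀ ε, 0 < ε → IsProbabilityMeasure (μ₀ ε))
    (htight₀ : ExpTight μ₀)
    (I₀ : B → EReal) (hLDP₀ : HasLDP μ₀ I₀)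
    (n : ℕ) (hn : 1 ≤ n)
    (Fs : ℕ → B → ℝ) (R : ℝ → B → ℝ) (Fe : ℝ → B → ℝ)
    (hmeasFs : ∀ i, Measurable (Fs i)) (hmeasR : ∀ ε, Measurable (R ε))
    (hexp : ∀ ε : ℝ, 0 < ε → ∀ y : B,
      Fe ε y = (∑ i ∈ Finset.range n, ε ^ i / (Nat.factorial i) * Fs i y) + ε ^ n * R ε y)
    (hF₀ : Continuous (Fs 0))
    (hR : ∀ y : B, Tendsto (fun ε : ℝ => R ε y) (𝓝[>] (0 : ℝ)) (𝓝 0))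
    (hmom : ∀ i < n, ∀ γ : ℝ, 0 < γ →
      Filter.limsup (fun ε : ℝ => ((ε ^ 2 : ℝ) : EReal) *
          ENNReal.log (∫⁻ y, ENNReal.ofReal
            (Real.exp (γ * max |Fs i y| |R ε y| / ε ^ 2)) ∂(μ₀ ε)))
        (𝓝[>] (0 : ℝ)) < (⊤ : EReal))
    (hZ : ∀ ε : ℝ, 0 < ε →
      0 < ∫⁻ y, ENNReal.ofReal (Real.exp (-Fe ε y / ε ^ 2)) ∂(μ₀ ε) ∧
      ∫⁻ y, ENNReal.ofReal (Real.exp (-Fe ε y / ε ^ 2)) ∂(μ₀ ε) < ⊤)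
    (μ : ℝ → Measure B)
    (hμ : ∀ ε : ℝ, 0 < ε → ∀ A : Set B, MeasurableSet A →
      μ ε A = (∫⁻ y in A, ENNReal.ofReal (Real.exp (-Fe ε y / ε ^ 2)) ∂(μ₀ ε)) /
        (∫⁻ y, ENNReal.ofReal (Real.exp (-Fe ε y / ε ^ 2)) ∂(μ₀ ε)))
    (htight : ExpTight μ) :
    HasLDP μ (fun y => I₀ y + (Fs 0 y : EReal) - ⨅ z : B, ((Fs 0 z : EReal) + I₀ z)) := by
  exact ldp_tilting_eps_dependent_general μ₀ hprob I₀ hLDP₀ n hn Fs R Fe hmeasFs hmeasR hexp hF₀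
    hmom μ hμ
end

section
/- Laplace asymptotics are governed by the leading term of the tilt: Let B be a Banach space and (μ₀^ε)_{ε>0} a family of Borel probability measures on B satisfying the LDP with speed ε² and good rate function I₀. For ε > 0 let F^ε : B → ℝ admit the expansion F^ε(y) = F₀(y) + ε F₁(y) + (ε²/2) F₂(y) + ⋯ + (ε^{n−1}/(n−1)!) F_{n−1}(y) + εⁿ R_n(ε, y), where F₀ is continuous, lim_{ε→0⁺} R_n(ε, y) = 0 for every y, and for every index 0 ≤ i ≤ n−1 and every γ > 0, limsup_{ε→0⁺} ε² log ∫_B exp( γ max{ |F_i(y)|, |R_n(ε, y)| } / ε² ) dμ₀^ε(y) < ∞. Then for every bounded continuous function φ : B → ℝ, lim_{ε→0⁺} ε² [ log ∫_B exp( −(φ(y) + F^ε(y))/ε² ) dμ₀^ε(y) − log ∫_B exp( −(φ(y) + F₀(y))/ε² ) dμ₀^ε(y) ] = 0. -/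
open MeasureTheory Filter Metric Set Topology

/-!
Put `u = -(φ + F₀) / ε²`, `v = -(φ + F^ε) / ε²` and `H = ∑ i < n, max |F_i| |R_n|`, so that
`|v - u| ≤ ε (H / ε²)`. Since `v ≤ u + ε (H / ε²) = (1 - ε) u + ε (u + H / ε²)`, Hölder's
inequality with exponents `1 / (1 - ε)` and `1 / ε` gives
`∫ exp v ≤ (∫ exp u) ^ (1 - ε) * (∫ exp (u + H / ε²)) ^ ε`. The moment bounds and the
Cauchy-Schwarz inequality `1 ≤ (∫ exp u) * (∫ exp (-u))` make the last integral at most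
`exp (O(1) / ε²) * ∫ exp u`, so `ε² (log ∫ exp v - log ∫ exp u) ≤ O(ε)`. The hypotheses are
symmetric in `u` and `v`, which gives the opposite inequality.
-/

open scoped ENNReal

section ExpIntegral

variable {Ω : Type*} [MeasurableSpace Ω] {μ : Measure Ω}

/-- The exponential integral `∫ exp f dμ`, taken in `ℝ≥0∞` so that it is `∞` when `exp ∘ f` is not
integrable. -/
noncomputable def expIntegral (μ : Measure Ω) (f : Ω → ℝ) : ℝ≥0∞ :=
  ∫⁻ y, ENNReal.ofReal (Real.exp (f y)) ∂μ

lemma ofReal_exp_add (a b : ℝ) :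
    ENNReal.ofReal (Real.exp (a + b)) =
      ENNReal.ofReal (Real.exp a) * ENNReal.ofReal (Real.exp b) := by
  rw [Real.exp_add, ENNReal.ofReal_mul (Real.exp_nonneg a)]

lemma ofReal_exp_mul (t a : ℝ) :
    ENNReal.ofReal (Real.exp (t * a)) = ENNReal.ofReal (Real.exp a) ^ t := by
  rw [ENNReal.ofReal_rpow_of_pos (Real.exp_pos a), ← Real.exp_mul, mul_comm]

lemma ofReal_exp_sum {ι : Type*} (s : Finset ι) (a : ι → ℝ) :
    ENNReal.ofReal (Real.exp (∑ i ∈ s, a i)) = ∏ i ∈ s, ENNReal.ofReal (Real.exp (a i)) := by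
  rw [Real.exp_sum, ENNReal.ofReal_prod_of_nonneg fun i _ ↦ Real.exp_nonneg (a i)]

lemma expIntegral_mono {f g : Ω → ℝ} (h : ∀ y, f y ≤ g y) :
    expIntegral μ f ≤ expIntegral μ g :=
  lintegral_mono fun y ↦ ENNReal.ofReal_le_ofReal (Real.exp_le_exp.2 (h y))

lemma expIntegral_ne_zero [NeZero μ] {f : Ω → ℝ} (hf : AEMeasurable f μ) :
    expIntegral μ f ≠ 0 := by
  rw [expIntegral, Ne, lintegral_eq_zero_iff' (by fun_prop)]
  intro hzero
  obtain ⟨y, hy⟩ := hzero.exists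
  exact (ENNReal.ofReal_pos.2 (Real.exp_pos (f y))).ne' hy

lemma expIntegral_const_add (a : ℝ) (f : Ω → ℝ) :
    expIntegral μ (fun y ↦ a + f y) = ENNReal.ofReal (Real.exp a) * expIntegral μ f := by
  simp only [expIntegral, ofReal_exp_add, lintegral_const_mul' _ _ ENNReal.ofReal_ne_top]

lemma expIntegral_le_of_le_const_add {f g : Ω → ℝ} {a L : ℝ} (hfg : ∀ y, f y ≤ a + g y)
    (hg : expIntegral μ g ≤ ENNReal.ofReal (Real.exp L)) :
    expIntegral μ f ≤ ENNReal.ofReal (Real.exp (a + L)) :=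
  calc expIntegral μ f ≤ expIntegral μ (fun y ↦ a + g y) := expIntegral_mono hfg
    _ = ENNReal.ofReal (Real.exp a) * expIntegral μ g := expIntegral_const_add a g
    _ ≤ ENNReal.ofReal (Real.exp a) * ENNReal.ofReal (Real.exp L) := by gcongr
    _ = ENNReal.ofReal (Real.exp (a + L)) := (ofReal_exp_add a L).symm

lemma expIntegral_convexComb_le {f g : Ω → ℝ} (hf : AEMeasurable f μ) (hg : AEMeasurable g μ)
    {p q : ℝ} (hp : 0 ≤ p) (hq : 0 ≤ q) (hpq : p + q = 1) :
    expIntegral μ (fun y ↦ p * f y + q * g y) ≤ expIntegral μ f ^ p * expIntegral μ g ^ q := by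
  simp only [expIntegral, ofReal_exp_add, ofReal_exp_mul]
  exact ENNReal.lintegral_mul_norm_pow_le (by fun_prop) (by fun_prop) hp hq hpq

lemma expIntegral_sum_le {ι : Type*} {s : Finset ι} (hs : s.Nonempty) {f : ι → Ω → ℝ}
    (hf : ∀ i ∈ s, AEMeasurable (f i) μ) {c : ℝ≥0∞}
    (hc : ∀ i ∈ s, expIntegral μ (fun y ↦ s.card * f i y) ≤ c) :
    expIntegral μ (fun y ↦ ∑ i ∈ s, f i y) ≤ c := by
  have hcard : (s.card : ℝ) ≠ 0 := by exact_mod_cast hs.card_ne_zero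
  have hsplit (y : Ω) : ENNReal.ofReal (Real.exp (∑ i ∈ s, f i y)) =
      ∏ i ∈ s, ENNReal.ofReal (Real.exp (s.card * f i y)) ^ (s.card : ℝ)⁻¹ := by
    simp only [← ofReal_exp_mul, inv_mul_cancel_left₀ hcard, ofReal_exp_sum]
  calc expIntegral μ (fun y ↦ ∑ i ∈ s, f i y)
      ≤ ∏ i ∈ s, expIntegral μ (fun y ↦ s.card * f i y) ^ (s.card : ℝ)⁻¹ := by
        simp only [expIntegral, hsplit]
        refine ENNReal.lintegral_prod_norm_pow_le s (fun i hi ↦ ?_) ?_ fun _ _ ↦ by positivity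
        · have := hf i hi
          fun_prop
        · rw [Finset.sum_const, nsmul_eq_mul, mul_inv_cancel₀ hcard]
    _ ≤ ∏ _i ∈ s, c ^ (s.card : ℝ)⁻¹ := by
        gcongr with i hi
        exact hc i hi
    _ = c := by
        rw [Finset.prod_const, ← ENNReal.rpow_natCast, ENNReal.rpow_inv_rpow hcard]

lemma one_le_expIntegral_mul_expIntegral_neg [IsProbabilityMeasure μ] {f : Ω → ℝ}
    (hf : AEMeasurable f μ) :
    1 ≤ expIntegral μ f * expIntegral μ (fun y ↦ -f y) := by
  have h := expIntegral_convexComb_le hf hf.fun_neg (p := 1 / 2) (q := 1 / 2) (by norm_num)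
    (by norm_num) (by norm_num)
  have hone : expIntegral μ (fun y ↦ 1 / 2 * f y + 1 / 2 * -f y) = 1 := by
    simp [expIntegral]
  rw [hone, ← ENNReal.mul_rpow_of_nonneg _ _ (by norm_num), ← ENNReal.one_rpow (1 / 2)] at h
  exact (ENNReal.rpow_le_rpow_iff (by norm_num)).1 h

lemma expIntegral_le_exp_mul_expIntegral {f g h : Ω → ℝ} (hf : AEMeasurable f μ)
    (hh : AEMeasurable h μ) {t c : ℝ} (ht : t ∈ Icc (0 : ℝ) 1)
    (hg : ∀ y, g y ≤ f y + t * h y)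
    (hc : expIntegral μ (fun y ↦ f y + h y) ≤ ENNReal.ofReal (Real.exp c) * expIntegral μ f) :
    expIntegral μ g ≤ ENNReal.ofReal (Real.exp (t * c)) * expIntegral μ f := by
  have ht' : 0 ≤ 1 - t := sub_nonneg.2 ht.2
  calc expIntegral μ g
      ≤ expIntegral μ (fun y ↦ (1 - t) * f y + t * (f y + h y)) :=
        expIntegral_mono fun y ↦ (hg y).trans_eq (by ring)
    _ ≤ expIntegral μ f ^ (1 - t) * expIntegral μ (fun y ↦ f y + h y) ^ t :=
        expIntegral_convexComb_le hf (hf.add hh) ht' ht.1 (sub_add_cancel 1 t)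
    _ ≤ expIntegral μ f ^ (1 - t) * (ENNReal.ofReal (Real.exp c) * expIntegral μ f) ^ t := by
        gcongr
        exact ht.1
    _ = ENNReal.ofReal (Real.exp (t * c)) *
          (expIntegral μ f ^ (1 - t) * expIntegral μ f ^ t) := by
        rw [ENNReal.mul_rpow_of_nonneg _ _ ht.1, ofReal_exp_mul, mul_left_comm]
    _ = ENNReal.ofReal (Real.exp (t * c)) * expIntegral μ f := by
        rw [← ENNReal.rpow_add_of_nonneg _ _ ht' ht.1, sub_add_cancel, ENNReal.rpow_one]

lemma expIntegral_add_le_exp_mul_expIntegral [IsProbabilityMeasure μ] {f h : Ω → ℝ} {K : ℝ}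
    (hf : AEMeasurable f μ)
    (hneg : expIntegral μ (fun y ↦ -f y) ≤ ENNReal.ofReal (Real.exp K))
    (hadd : expIntegral μ (fun y ↦ f y + h y) ≤ ENNReal.ofReal (Real.exp K)) :
    expIntegral μ (fun y ↦ f y + h y) ≤ ENNReal.ofReal (Real.exp (2 * K)) * expIntegral μ f :=
  calc expIntegral μ (fun y ↦ f y + h y)
      ≤ ENNReal.ofReal (Real.exp K) * 1 := by rwa [mul_one]
    _ ≤ ENNReal.ofReal (Real.exp K) * (expIntegral μ f * ENNReal.ofReal (Real.exp K)) := by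
        gcongr
        exact (one_le_expIntegral_mul_expIntegral_neg hf).trans (by gcongr)
    _ = ENNReal.ofReal (Real.exp (2 * K)) * expIntegral μ f := by
        rw [two_mul, ofReal_exp_add, mul_left_comm, mul_comm]

lemma log_sub_log_le_of_le_exp_mul {x y : ℝ≥0∞} {c : ℝ}
    (h : x ≤ ENNReal.ofReal (Real.exp c) * y) : ENNReal.log x - ENNReal.log y ≤ c := by
  refine EReal.sub_le_of_le_add ((ENNReal.log_le_log h).trans_eq ?_)
  rw [ENNReal.log_mul_add, ENNReal.log_ofReal_of_pos (Real.exp_pos c), Real.log_exp]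

lemma log_expIntegral_sub_le [IsProbabilityMeasure μ] {f g h : Ω → ℝ} {a L t : ℝ}
    (hf : AEMeasurable f μ) (hh : AEMeasurable h μ) (ht : t ∈ Icc (0 : ℝ) 1)
    (h_nonneg : ∀ y, 0 ≤ h y) (hfa : ∀ y, |f y| ≤ a + 2 * h y)
    (hg : ∀ y, g y ≤ f y + t * h y)
    (hL : expIntegral μ (fun y ↦ 3 * h y) ≤ ENNReal.ofReal (Real.exp L)) :
    ENNReal.log (expIntegral μ g) - ENNReal.log (expIntegral μ f) ≤
      ((t * (2 * (a + L)) : ℝ) : EReal) := by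
  refine log_sub_log_le_of_le_exp_mul (expIntegral_le_exp_mul_expIntegral hf hh ht hg
    (expIntegral_add_le_exp_mul_expIntegral hf
      (expIntegral_le_of_le_const_add (fun y ↦ ?_) hL)
      (expIntegral_le_of_le_const_add (fun y ↦ ?_) hL)))
  · linarith [neg_le_abs (f y), hfa y, h_nonneg y]
  · linarith [le_abs_self (f y), hfa y]

lemma log_expIntegral_sub_mem_Icc [IsProbabilityMeasure μ] {f g h : Ω → ℝ} {a L t : ℝ}
    (hf : AEMeasurable f μ) (hg : AEMeasurable g μ) (hh : AEMeasurable h μ)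
    (ht : t ∈ Icc (0 : ℝ) 1) (h_nonneg : ∀ y, 0 ≤ h y) (hfa : ∀ y, |f y| ≤ a + h y)
    (hgf : ∀ y, |g y - f y| ≤ t * h y)
    (hL : expIntegral μ (fun y ↦ 3 * h y) ≤ ENNReal.ofReal (Real.exp L)) :
    ENNReal.log (expIntegral μ g) - ENNReal.log (expIntegral μ f) ∈
      Icc (-((t * (2 * (a + L)) : ℝ) : EReal)) ((t * (2 * (a + L)) : ℝ) : EReal) := by
  have hfa' (y : Ω) : |f y| ≤ a + 2 * h y := by linarith [hfa y, h_nonneg y]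
  have hga (y : Ω) : |g y| ≤ a + 2 * h y := by
    have htri := (abs_sub_abs_le_abs_sub (g y) (f y)).trans (hgf y)
    linarith [hfa y, mul_le_of_le_one_left (h_nonneg y) ht.2]
  have hf_ne_bot : ENNReal.log (expIntegral μ f) ≠ ⊥ :=
    mt ENNReal.log_eq_bot_iff.1 (expIntegral_ne_zero hf)
  have hf_le : expIntegral μ f ≤ ENNReal.ofReal (Real.exp (a + L)) :=
    expIntegral_le_of_le_const_add
      (fun y ↦ by linarith [le_abs_self (f y), hfa' y, h_nonneg y]) hL
  have hf_ne_top : ENNReal.log (expIntegral μ f) ≠ ⊤ :=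
    mt ENNReal.log_eq_top_iff.1 (hf_le.trans_lt ENNReal.ofReal_lt_top).ne
  constructor
  · rw [EReal.neg_le, EReal.neg_sub (.inr hf_ne_bot) (.inr hf_ne_top), add_comm (-_),
      ← sub_eq_add_neg]
    exact log_expIntegral_sub_le hg hh ht h_nonneg hga
      (fun y ↦ by linarith [neg_le_abs (g y - f y), hgf y]) hL
  · exact log_expIntegral_sub_le hf hh ht h_nonneg hfa'
      (fun y ↦ by linarith [le_abs_self (g y - f y), hgf y]) hL

end ExpIntegral

section LaplaceAsymptotics

variable {Ω : Type*} [MeasurableSpace Ω] {μ : ℝ → Measure Ω}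

/-- The exponential integrals of the family `f` under `μ` at speed `ε²` grow at most like
`exp (C / ε²)`; this is `limsup ε² log ∫ exp (f ε / ε²) dμ^ε < ∞`, unfolded. -/
def ExponentiallyBounded (μ : ℝ → Measure Ω) (f : ℝ → Ω → ℝ) : Prop :=
  ∃ C : ℝ, ∀ᶠ ε in 𝓝[>] (0 : ℝ),
    expIntegral (μ ε) (fun y ↦ f ε y / ε ^ 2) ≤ ENNReal.ofReal (Real.exp (C / ε ^ 2))

lemma exponentiallyBounded_of_limsup_lt_top {f : ℝ → Ω → ℝ}
    (h : limsup (fun ε : ℝ ↦ ((ε ^ 2 : ℝ) : EReal) *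
      ENNReal.log (expIntegral (μ ε) fun y ↦ f ε y / ε ^ 2)) (𝓝[>] (0 : ℝ)) < ⊤) :
    ExponentiallyBounded μ f := by
  obtain ⟨C, hC, -⟩ := EReal.lt_iff_exists_real_btwn.1 h
  refine ⟨C, ?_⟩
  filter_upwards [eventually_lt_of_limsup_lt hC, self_mem_nhdsWithin] with ε hlt (hε : 0 < ε)
  have hsq : (0 : EReal) < ((ε ^ 2 : ℝ) : EReal) := by exact_mod_cast pow_pos hε 2
  rw [← ENNReal.log_le_log_iff, ENNReal.log_ofReal_of_pos (Real.exp_pos _), Real.log_exp,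
    EReal.coe_div, EReal.le_div_iff_mul_le hsq (EReal.coe_ne_top _), mul_comm]
  exact hlt.le

lemma ExponentiallyBounded.sum {ι : Type*} {s : Finset ι} (hs : s.Nonempty)
    {f : ι → ℝ → Ω → ℝ} (hf : ∀ i ∈ s, ∀ ε, AEMeasurable (f i ε) (μ ε))
    (hbdd : ∀ i ∈ s, ExponentiallyBounded μ fun ε y ↦ s.card * f i ε y) :
    ExponentiallyBounded μ fun ε y ↦ ∑ i ∈ s, f i ε y := by
  choose! C hC using hbdd
  obtain ⟨D, hD⟩ := (s.image C).exists_le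
  refine ⟨D, ?_⟩
  filter_upwards [(eventually_all_finset s).2 hC] with ε hε
  simp only [Finset.sum_div]
  refine expIntegral_sum_le hs (fun i hi ↦ (hf i hi ε).div_const _) fun i hi ↦ ?_
  simp only [← mul_div_assoc]
  have hCD : C i ≤ D := hD _ (Finset.mem_image_of_mem C hi)
  exact (hε i hi).trans (by gcongr)

lemma log_expIntegral_neg_div_sub_mem_Icc {ν : Measure Ω} [IsProbabilityMeasure ν]
    {U V H : Ω → ℝ} {M C t s : ℝ} (hU : AEMeasurable U ν) (hV : AEMeasurable V ν)
    (hH : AEMeasurable H ν) (ht : t ∈ Ioc (0 : ℝ) 1) (hs : 0 < s)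
    (hUM : ∀ y, |U y| ≤ M + H y) (hUV : ∀ y, |V y - U y| ≤ t * H y)
    (hC : expIntegral ν (fun y ↦ 3 * H y / s) ≤ ENNReal.ofReal (Real.exp (C / s))) :
    (s : EReal) * (ENNReal.log (expIntegral ν fun y ↦ -V y / s) -
      ENNReal.log (expIntegral ν fun y ↦ -U y / s)) ∈
        Icc ((-(2 * (M + C) * t) : ℝ) : EReal) ((2 * (M + C) * t : ℝ) : EReal) := by
  have hH₀ (y : Ω) : 0 ≤ H y := nonneg_of_mul_nonneg_right ((abs_nonneg _).trans (hUV y)) ht.1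
  have hscale (y : Ω) : |-U y / s| ≤ M / s + H y / s := by
    rw [abs_div, abs_neg, abs_of_pos hs, ← add_div]
    gcongr
    exact hUM y
  have hscale_sub (y : Ω) : |-V y / s - -U y / s| ≤ t * (H y / s) := by
    rw [← sub_div, abs_div, abs_of_pos hs, ← mul_div_assoc, neg_sub_neg, abs_sub_comm]
    gcongr
    exact hUV y
  have hcancel : 2 * (M + C) * t = s * (t * (2 * (M / s + C / s))) := by field_simp
  obtain ⟨hlow, hupp⟩ := log_expIntegral_sub_mem_Icc (by fun_prop) (by fun_prop) (by fun_prop)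
    (Ioc_subset_Icc_self ht) (fun y ↦ div_nonneg (hH₀ y) hs.le) hscale hscale_sub
    (by simpa only [mul_div_assoc] using hC)
  rw [← EReal.coe_neg] at hlow
  have hs' : (0 : EReal) ≤ s := by exact_mod_cast hs.le
  rw [hcancel, ← mul_neg, EReal.coe_mul, EReal.coe_mul s]
  exact ⟨mul_le_mul_of_nonneg_left hlow hs', mul_le_mul_of_nonneg_left hupp hs'⟩

lemma tendsto_sq_mul_log_expIntegral_sub (hμ : ∀ ε, 0 < ε → IsProbabilityMeasure (μ ε))
    {U V H : ℝ → Ω → ℝ} {M : ℝ} (hU : ∀ ε, 0 < ε → AEMeasurable (U ε) (μ ε))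
    (hV : ∀ ε, 0 < ε → AEMeasurable (V ε) (μ ε)) (hH : ∀ ε, 0 < ε → AEMeasurable (H ε) (μ ε))
    (hUM : ∀ ε ∈ Ioc (0 : ℝ) 1, ∀ y, |U ε y| ≤ M + H ε y)
    (hUV : ∀ ε ∈ Ioc (0 : ℝ) 1, ∀ y, |V ε y - U ε y| ≤ ε * H ε y)
    (hbdd : ExponentiallyBounded μ fun ε y ↦ 3 * H ε y) :
    Tendsto (fun ε : ℝ ↦ ((ε ^ 2 : ℝ) : EReal) *
      (ENNReal.log (expIntegral (μ ε) fun y ↦ -V ε y / ε ^ 2) -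
        ENNReal.log (expIntegral (μ ε) fun y ↦ -U ε y / ε ^ 2))) (𝓝[>] (0 : ℝ)) (𝓝 0) := by
  obtain ⟨C, hC⟩ := hbdd
  have hmem : ∀ᶠ ε in 𝓝[>] (0 : ℝ), ((ε ^ 2 : ℝ) : EReal) *
      (ENNReal.log (expIntegral (μ ε) fun y ↦ -V ε y / ε ^ 2) -
        ENNReal.log (expIntegral (μ ε) fun y ↦ -U ε y / ε ^ 2)) ∈
          Icc ((-(2 * (M + C) * ε) : ℝ) : EReal) ((2 * (M + C) * ε : ℝ) : EReal) := by
    filter_upwards [hC, Ioc_mem_nhdsGT zero_lt_one] with ε hCε hε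
    have := hμ ε hε.1
    exact log_expIntegral_neg_div_sub_mem_Icc (hU ε hε.1) (hV ε hε.1) (hH ε hε.1) hε
      (pow_pos hε.1 2) (hUM ε hε) (hUV ε hε) hCε
  have hbound : Tendsto (fun ε : ℝ ↦ 2 * (M + C) * ε) (𝓝[>] 0) (𝓝 0) :=
    tendsto_nhdsWithin_of_tendsto_nhds (Continuous.tendsto' (by fun_prop) _ _ (mul_zero _))
  refine tendsto_of_tendsto_of_tendsto_of_le_of_le' ?_ (EReal.tendsto_coe.2 hbound)
    (hmem.mono fun _ h ↦ h.1) (hmem.mono fun _ h ↦ h.2)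
  simpa using EReal.tendsto_coe.2 hbound.neg

lemma abs_expansion_sub_le {n : ℕ} (hn : 1 ≤ n) {ε : ℝ} (hε : ε ∈ Icc (0 : ℝ) 1) (a : ℕ → ℝ)
    (r : ℝ) :
    |(∑ i ∈ Finset.range n, ε ^ i / i.factorial * a i) + ε ^ n * r - a 0| ≤
      ε * ∑ i ∈ Finset.range n, max |a i| |r| := by
  obtain ⟨k, rfl⟩ := Nat.exists_eq_add_of_le' hn
  have hpow (i : ℕ) : ε ^ (i + 1) ≤ ε := pow_le_of_le_one hε.1 hε.2 i.succ_ne_zero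
  have hterm (i : ℕ) :
      |ε ^ (i + 1) / (i + 1).factorial * a (i + 1)| ≤ ε * max |a (i + 1)| |r| := by
    have hfact : (1 : ℝ) ≤ (i + 1).factorial := by exact_mod_cast Nat.factorial_pos _
    have hcoeff := div_nonneg (pow_nonneg hε.1 (i + 1)) (zero_le_one.trans hfact)
    rw [abs_mul, abs_of_nonneg hcoeff]
    exact mul_le_mul ((div_le_self (pow_nonneg hε.1 _) hfact).trans (hpow i)) (le_max_left _ _)
      (abs_nonneg _) hε.1
  have hrem : |ε ^ (k + 1) * r| ≤ ε * max |a 0| |r| := by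
    rw [abs_mul, abs_of_nonneg (pow_nonneg hε.1 _)]
    exact mul_le_mul (hpow k) (le_max_right _ _) (abs_nonneg _) hε.1
  calc _ = |(∑ i ∈ Finset.range k, ε ^ (i + 1) / (i + 1).factorial * a (i + 1)) +
          ε ^ (k + 1) * r| := by
        rw [Finset.sum_range_succ']
        congr 1
        simp only [pow_zero, Nat.factorial_zero, Nat.cast_one]
        ring
    _ ≤ (∑ i ∈ Finset.range k, ε * max |a (i + 1)| |r|) + ε * max |a 0| |r| :=
        (abs_add_le _ _).trans
          (add_le_add (Finset.abs_sum_le_sum_abs _ _ |>.trans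
            (Finset.sum_le_sum fun i _ ↦ hterm i)) hrem)
    _ = ε * ∑ i ∈ Finset.range (k + 1), max |a i| |r| := by
        rw [Finset.sum_range_succ', mul_add, Finset.mul_sum]

theorem laplace_asymptotics_leading_term_general
    (hprob : ∀ ε, 0 < ε → IsProbabilityMeasure (μ ε)) {n : ℕ} (hn : 1 ≤ n)
    {Fs : ℕ → Ω → ℝ} {R Fe : ℝ → Ω → ℝ} (hFs : ∀ i, Measurable (Fs i))
    (hR : ∀ ε, Measurable (R ε))
    (hexp : ∀ ε : ℝ, 0 < ε → ∀ y : Ω,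
      Fe ε y = (∑ i ∈ Finset.range n, ε ^ i / (Nat.factorial i) * Fs i y) + ε ^ n * R ε y)
    (hmom : ∀ i < n, ∀ γ : ℝ, 0 < γ →
      limsup (fun ε : ℝ ↦ ((ε ^ 2 : ℝ) : EReal) *
          ENNReal.log (∫⁻ y, ENNReal.ofReal
            (Real.exp (γ * max |Fs i y| |R ε y| / ε ^ 2)) ∂(μ ε)))
        (𝓝[>] (0 : ℝ)) < (⊤ : EReal))
    {φ : Ω → ℝ} (hφ : Measurable φ) {M : ℝ} (hM : ∀ y, |φ y| ≤ M) :
    Tendsto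
      (fun ε : ℝ ↦ ((ε ^ 2 : ℝ) : EReal) *
        (ENNReal.log (∫⁻ y, ENNReal.ofReal (Real.exp (-(φ y + Fe ε y) / ε ^ 2)) ∂(μ ε)) -
          ENNReal.log (∫⁻ y, ENNReal.ofReal (Real.exp (-(φ y + Fs 0 y) / ε ^ 2)) ∂(μ ε))))
      (𝓝[>] (0 : ℝ)) (𝓝 (0 : EReal)) := by
  set H : ℝ → Ω → ℝ := fun ε y ↦ ∑ i ∈ Finset.range n, max |Fs i y| |R ε y| with hH_def
  have hH_meas (ε : ℝ) : Measurable (H ε) := by fun_prop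
  have hFe_meas (ε : ℝ) (hε : 0 < ε) : Measurable (Fe ε) := by
    rw [funext (hexp ε hε)]
    fun_prop
  have hF₀ (ε : ℝ) (y : Ω) : |Fs 0 y| ≤ H ε y :=
    (le_max_left _ _).trans <| Finset.single_le_sum (f := fun i ↦ max |Fs i y| |R ε y|)
      (fun i _ ↦ (abs_nonneg _).trans (le_max_left _ _)) (Finset.mem_range.2 hn)
  have hdiff (ε : ℝ) (hε : ε ∈ Ioc (0 : ℝ) 1) (y : Ω) : |Fe ε y - Fs 0 y| ≤ ε * H ε y := by
    rw [hexp ε hε.1]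
    exact abs_expansion_sub_le hn (Ioc_subset_Icc_self hε) (Fs · y) (R ε y)
  have hbdd : ExponentiallyBounded μ fun ε y ↦ 3 * H ε y := by
    simp only [hH_def, Finset.mul_sum]
    refine .sum (Finset.nonempty_range_iff.2 (Nat.one_le_iff_ne_zero.1 hn))
      (fun i _ ε ↦ by fun_prop) fun i hi ↦ exponentiallyBounded_of_limsup_lt_top ?_
    simpa only [expIntegral, Finset.card_range, mul_assoc] using
      hmom i (Finset.mem_range.1 hi) (n * 3)
        (mul_pos (Nat.cast_pos.2 hn) three_pos)
  exact tendsto_sq_mul_log_expIntegral_sub hprob (M := M) (U := fun _ y ↦ φ y + Fs 0 y)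
    (V := fun ε y ↦ φ y + Fe ε y) (fun ε _ ↦ by fun_prop)
    (fun ε hε ↦ (hφ.add (hFe_meas ε hε)).aemeasurable) (fun ε _ ↦ (hH_meas ε).aemeasurable)
    (fun ε _ y ↦ (abs_add_le _ _).trans (add_le_add (hM y) (hF₀ ε y)))
    (fun ε hε y ↦ by simpa only [add_sub_add_left_eq_sub] using hdiff ε hε y) hbdd

end LaplaceAsymptotics

/-- **Laplace asymptotics are governed by the leading term of the tilt.** If
`Fε = F₀ + ε F₁ + ⋯ + ε^{n−1}/(n−1)! F_{n−1} + εⁿ Rₙ(ε,·)` with suitable exponential moment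
bounds, then for every bounded continuous `φ` the exponential integrals against `φ + Fε` and
against `φ + F₀` have the same logarithmic asymptotics at speed `ε²`. -/
theorem laplace_asymptotics_leading_term
    {B : Type*} [NormedAddCommGroup B] [NormedSpace ℝ B] [CompleteSpace B]
    [MeasurableSpace B] [BorelSpace B]
    (μ₀ : ℝ → Measure B) (hprob : ∀ ε, 0 < ε → IsProbabilityMeasure (μ₀ ε))
    (I₀ : B → EReal) (hLDP₀ : HasLDP μ₀ I₀)
    (n : ℕ) (hn : 1 ≤ n)
    (Fs : ℕ → B → ℝ) (R : ℝ → B → ℝ) (Fe : ℝ → B → ℝ)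
    (hmeasFs : ∀ i, Measurable (Fs i)) (hmeasR : ∀ ε, Measurable (R ε))
    (hexp : ∀ ε : ℝ, 0 < ε → ∀ y : B,
      Fe ε y = (∑ i ∈ Finset.range n, ε ^ i / (Nat.factorial i) * Fs i y) + ε ^ n * R ε y)
    (hF₀ : Continuous (Fs 0))
    (hR : ∀ y : B, Tendsto (fun ε : ℝ => R ε y) (𝓝[>] (0 : ℝ)) (𝓝 0))
    (hmom : ∀ i < n, ∀ γ : ℝ, 0 < γ →
      Filter.limsup (fun ε : ℝ => ((ε ^ 2 : ℝ) : EReal) *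
          ENNReal.log (∫⁻ y, ENNReal.ofReal
            (Real.exp (γ * max |Fs i y| |R ε y| / ε ^ 2)) ∂(μ₀ ε)))
        (𝓝[>] (0 : ℝ)) < (⊤ : EReal))
    (φ : B → ℝ) (hφcont : Continuous φ) (hφbdd : ∃ M : ℝ, ∀ y, |φ y| ≤ M) :
    Tendsto
      (fun ε : ℝ => ((ε ^ 2 : ℝ) : EReal) *
        (ENNReal.log (∫⁻ y, ENNReal.ofReal (Real.exp (-(φ y + Fe ε y) / ε ^ 2)) ∂(μ₀ ε)) -
          ENNReal.log (∫⁻ y, ENNReal.ofReal (Real.exp (-(φ y + Fs 0 y) / ε ^ 2)) ∂(μ₀ ε))))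
      (𝓝[>] (0 : ℝ)) (𝓝 (0 : EReal)) := by
  obtain ⟨M, hM⟩ := hφbdd
  exact laplace_asymptotics_leading_term_general hprob hn hmeasFs hmeasR hexp hmom
    hφcont.measurable hM
end

section
/- Convergence of Onsager–Machlup minimizers to Freidlin–Wentzell minimizers (finite-dimensional case): In the setting of the finite-dimensional main theorem — γ the standard Gaussian on E = EuclideanSpace ℝ (Fin d), F^ε(y) = F₀(y) + ε F₁(y) + ⋯ + εⁿ R_n(ε, y) with F₀ continuous, lim_{ε→0⁺} R_n(ε, y) = 0 pointwise, and every point having a neighborhood on which all |F_i| and, for all small ε, |R_n(ε,·)| are bounded by a common constant — suppose (ε_k) is a sequence of positive reals tending to 0, and for each k the point z_k ∈ E minimizes the function z ↦ F^{ε_k}(z) + ‖z‖²/2 over E. If z_k → z* in E, then z* minimizes z ↦ F₀(z) + ‖z‖²/2 over E. -/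
open MeasureTheory Filter Metric Set Topology

/-!
Bounded coefficients times positive powers of `ε` vanish uniformly near `z*`, so `F^ε → F₀`
uniformly near `z*` and pointwise at each competitor `w`. In
`F^{ε_k}(z_k) + ‖z_k‖²/2 ≤ F^{ε_k}(w) + ‖w‖²/2` the right side then converges, and lower
semicontinuity of the limit functional at `z*` bounds the left side from below.
-/

section Convergence

variable {ι X : Type*} {p : Filter ι}

theorem tendstoUniformlyOnFilter_smallParameterExpansion {V : Type*} [SeminormedAddCommGroup V]
    [NormedSpace ℝ V] {l : Filter X} {n : ℕ} (hn : 1 ≤ n) {ε : ι → ℝ} (hε : Tendsto ε p (𝓝 0))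
    {F : ℕ → X → V} {R : ι → X → V}
    (hF : ∀ i, 0 < i → i < n → l.IsBoundedUnder (· ≤ ·) fun y => ‖F i y‖)
    (hR : (p ×ˢ l).IsBoundedUnder (· ≤ ·) fun q => ‖R q.1 q.2‖) :
    TendstoUniformlyOnFilter
      (fun k y => ∑ i ∈ Finset.range n, (ε k ^ i / (Nat.factorial i)) • F i y + ε k ^ n • R k y)
      (F 0) p l := by
  obtain ⟨m, rfl⟩ := Nat.exists_eq_add_of_le' hn
  have hpow (i : ℕ) : Tendsto (fun q : ι × X => ε q.1 ^ (i + 1)) (p ×ˢ l) (𝓝 0) := by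
    simpa using (hε.comp tendsto_fst).pow (i + 1)
  have hterm (i : ℕ) (hi : i ∈ Finset.range m) : Tendsto
      (fun q : ι × X => (ε q.1 ^ (i + 1) / (Nat.factorial (i + 1))) • F (i + 1) q.2)
      (p ×ˢ l) (𝓝 0) := by
    have hcoeff := (hpow i).div_const (Nat.factorial (i + 1) : ℝ)
    rw [zero_div] at hcoeff
    exact hcoeff.zero_smul_isBoundedUnder_le <| tendsto_snd.isBoundedUnder_comp <|
      hF (i + 1) i.succ_pos (Nat.succ_lt_succ (Finset.mem_range.mp hi))
  have hsum := (tendsto_finsetSum _ hterm).add ((hpow m).zero_smul_isBoundedUnder_le hR)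
  rw [Finset.sum_const_zero, add_zero] at hsum
  rw [tendstoUniformlyOnFilter_iff_tendsto, uniformity_eq_comap_nhds_zero, tendsto_comap_iff]
  refine hsum.congr fun q => ?_
  simp only [Function.comp_apply, Finset.sum_range_succ', pow_zero, Nat.factorial_zero,
    Nat.cast_one, div_one, one_smul]
  abel

variable [TopologicalSpace X] {f : ι → X → ℝ} {J : X → ℝ} {x : X}

theorem eventually_prod_lt_of_tendstoUniformlyOnFilter
    (hf : TendstoUniformlyOnFilter f J p (𝓝 x)) (hJ : LowerSemicontinuousAt J x) {a : ℝ}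
    (ha : a < J x) : ∀ᶠ q in p ×ˢ 𝓝 x, a < f q.1 q.2 := by
  obtain ⟨b, hab, hb⟩ := exists_between ha
  filter_upwards [Metric.tendstoUniformlyOnFilter_iff.mp hf (b - a) (sub_pos.mpr hab),
    tendsto_snd.eventually (hJ b hb)] with q hclose hlt
  rw [Real.dist_eq] at hclose
  linarith [(abs_lt.mp hclose).2]

theorem le_of_mapClusterPt_of_tendstoUniformlyOnFilter
    (hf : TendstoUniformlyOnFilter f J p (𝓝 x)) (hJ : LowerSemicontinuousAt J x)
    {z : ι → X} (hz : MapClusterPt x p z) {w : X} (hw : Tendsto (fun k => f k w) p (𝓝 (J w)))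
    (hle : ∀ᶠ k in p, f k (z k) ≤ f k w) : J x ≤ J w := by
  refine le_of_forall_lt_imp_le_of_dense fun a ha => ?_
  obtain ⟨P, hP, Q, hQ, hPQ⟩ :=
    eventually_prod_iff.mp (eventually_prod_lt_of_tendstoUniformlyOnFilter hf hJ ha)
  refine ge_of_tendsto_of_frequently hw ?_
  exact ((hz.frequently hQ).and_eventually (hP.and hle)).mono
    fun k ⟨hzk, hk, hlek⟩ => (hPQ hk hzk).le.trans hlek

theorem om_minimizers_converge_to_fw_minimizer_general {n : ℕ} (hn : 1 ≤ n)
    {ε : ι → ℝ} (hε : Tendsto ε p (𝓝 0)) {F : ℕ → X → ℝ} {R : ι → X → ℝ}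
    (hexp : ∀ k y, f k y =
      (∑ i ∈ Finset.range n, ε k ^ i / (Nat.factorial i) * F i y) + ε k ^ n * R k y)
    (hF : ∀ i, 0 < i → i < n → (𝓝 x).IsBoundedUnder (· ≤ ·) fun y => ‖F i y‖)
    (hR : (p ×ˢ 𝓝 x).IsBoundedUnder (· ≤ ·) fun q => ‖R q.1 q.2‖)
    (hRw : ∀ w, p.IsBoundedUnder (· ≤ ·) fun k => ‖R k w‖)
    {Φ : X → ℝ} (hlsc : LowerSemicontinuousAt (F 0 + Φ) x)
    {z : ι → X} (hz : MapClusterPt x p z)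
    (hmin : ∀ w, ∀ᶠ k in p, f k (z k) + Φ (z k) ≤ f k w + Φ w) (w : X) :
    F 0 x + Φ x ≤ F 0 w + Φ w := by
  obtain rfl := funext₂ hexp
  have hnear : TendstoUniformlyOnFilter _ (F 0) p (𝓝 x) :=
    tendstoUniformlyOnFilter_smallParameterExpansion hn hε hF hR
  -- Along `pure w` each coefficient is constant, hence bounded.
  have hat : TendstoUniformlyOnFilter _ (F 0) p (pure w) :=
    tendstoUniformlyOnFilter_smallParameterExpansion hn hε
      (fun i _ _ => ((tendsto_pure_nhds (F i) w).norm).isBoundedUnder_le)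
      (by simpa only [prod_pure, IsBoundedUnder, map_map, Function.comp_def] using hRw w)
  have hΦ : TendstoUniformlyOnFilter (fun _ => Φ) Φ p (𝓝 x) :=
    fun _ hu => .of_forall fun _ => refl_mem_uniformity hu
  exact le_of_mapClusterPt_of_tendstoUniformlyOnFilter (hnear.add hΦ) hlsc hz
    ((hat.tendsto_at (principal_singleton w).le).add_const (Φ w)) (hmin w)

end Convergence

/-- **Convergence of Onsager–Machlup minimizers to Freidlin–Wentzell minimizers (finite
dimensions).** If `Fε = F₀ + ε F₁ + ⋯ + εⁿ Rₙ(ε,·)` with `F₀` continuous, `Rₙ(ε,y) → 0`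
pointwise and local uniform boundedness of the coefficients, `ε_k → 0⁺`, `z_k` minimizes
`F^{ε_k} + ‖·‖²/2` and `z_k → z*`, then `z*` minimizes `F₀ + ‖·‖²/2`. -/
theorem om_minimizers_converge_to_fw_minimizer (d : ℕ)
    (n : ℕ) (hn : 1 ≤ n)
    (Fs : ℕ → EuclideanSpace ℝ (Fin d) → ℝ) (R : ℝ → EuclideanSpace ℝ (Fin d) → ℝ)
    (Fe : ℝ → EuclideanSpace ℝ (Fin d) → ℝ)
    (hexp : ∀ ε : ℝ, 0 < ε → ∀ y,
      Fe ε y = (∑ i ∈ Finset.range n, ε ^ i / (Nat.factorial i) * Fs i y) + ε ^ n * R ε y)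
    (hF₀ : Continuous (Fs 0))
    (hR : ∀ y, Tendsto (fun ε : ℝ => R ε y) (𝓝[>] (0 : ℝ)) (𝓝 0))
    (hbd : ∀ z, ∃ N ∈ 𝓝 z, ∃ C : ℝ, 0 < C ∧ ∃ ε₀ : ℝ, 0 < ε₀ ∧
      (∀ y ∈ N, ∀ i ≤ n - 1, |Fs i y| ≤ C) ∧
      (∀ y ∈ N, ∀ ε : ℝ, 0 < ε → ε < ε₀ → |R ε y| ≤ C))
    (εs : ℕ → ℝ) (hεpos : ∀ k, 0 < εs k) (hεlim : Tendsto εs atTop (𝓝 0))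
    (zs : ℕ → EuclideanSpace ℝ (Fin d))
    (hmin : ∀ k, ∀ w : EuclideanSpace ℝ (Fin d),
      Fe (εs k) (zs k) + ‖zs k‖ ^ 2 / 2 ≤ Fe (εs k) w + ‖w‖ ^ 2 / 2)
    (zstar : EuclideanSpace ℝ (Fin d)) (hconv : Tendsto zs atTop (𝓝 zstar)) :
    ∀ w : EuclideanSpace ℝ (Fin d),
      Fs 0 zstar + ‖zstar‖ ^ 2 / 2 ≤ Fs 0 w + ‖w‖ ^ 2 / 2 := by
  obtain ⟨N, hN, C, -, ε₀, hε₀, hFC, hRC⟩ := hbd zstar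
  have hεright : Tendsto εs atTop (𝓝[>] 0) :=
    tendsto_nhdsWithin_iff.mpr ⟨hεlim, .of_forall hεpos⟩
  have hRnear : ∀ᶠ q in atTop ×ˢ 𝓝 zstar, ‖R (εs q.1) q.2‖ ≤ C :=
    ((hεlim.eventually_lt_const hε₀).prod_mk hN).mono
      fun q ⟨hlt, hq⟩ => hRC q.2 hq _ (hεpos q.1) hlt
  exact om_minimizers_converge_to_fw_minimizer_general hn hεlim
    (fun k y => hexp _ (hεpos k) y)
    (fun i _ hi => isBoundedUnder_of_eventually_le <|
      mem_of_superset hN fun y hy => hFC y hy i (Nat.le_sub_one_of_lt hi))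
    (isBoundedUnder_of_eventually_le hRnear)
    (fun w => ((hR w).comp hεright).norm.isBoundedUnder_le)
    (hF₀.add (by fun_prop : Continuous fun y => ‖y‖ ^ 2 / 2)).continuousAt.lowerSemicontinuousAt
    hconv.mapClusterPt fun w => .of_forall fun k => hmin k w
end
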